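/- arXiv:1712.10324 — 6 statements merged into one kernel-verified Lean document; each statement's English description precedes it below -/
import Mathlib

section
/- For every real number p > 0 and all real numbers a, b, the identity (2/π) · ∫₀^∞ ∫₀^∞ cos(xy) cos(ax) cos(by) / (cosh(p x) · cosh(π y/p)) dx dy = √2 · cosh(π a/(2p)) cosh(p b/2) / (cosh(π a/p) cosh(p b)) − cos(ab) / (cosh(π a/p) cosh(p b)) holds. -/
open Real MeasureTheory

/-!
All the integrals involved reduce to the bilateral Laplace transform
`∫ exp (z x) / cosh (k x) dx = (π / k) / cos (π z / (2 k))` for `|Re z| < k` (`sech_laplace`), which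
is the Beta integral `B(s, 1 - s) = Γ(s) Γ(1 - s) = π / sin (π s)` after the substitution
`t = sigmoid u`.

With `z` imaginary this evaluates the inner integral in closed form (`inner_integral`): it is a
multiple of `sech (p (x - b) / 2) + sech (p (x + b) / 2)`. In the outer integral, both summands give
the same value over the whole line, and that value (`outer_integral`) follows from the partial
fraction decomposition
`cosh β / (cosh u cosh ((u - β) / 2)) = 2 cosh ((u + β) / 2) / cosh u - 1 / cosh ((u - β) / 2)`
(`sech_mul_sech`): the first term is a transform with `Re z = ± p / 2`, which produces the `√2`, and
the second is a shifted transform with `Re z = 0`, which produces `cos (a b)`.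
-/

/-- The substitution `t = sigmoid u` turns the Beta integral `B(w + 1/2, 1/2 - w)` into an integral
over the whole line. -/
lemma sigmoid_beta_integrand (w : ℂ) (u : ℝ) :
    |sigmoid u * (1 - sigmoid u)| • ((sigmoid u : ℂ) ^ ((w + 1/2) - 1) *
      (1 - (sigmoid u : ℂ)) ^ ((1/2 - w) - 1)) =
      (1/2 : ℂ) * (Complex.exp (w * u) / Complex.cosh (u / 2)) := by
  have h0 := sigmoid_pos u
  have h1 : 0 < 1 - sigmoid u := by linarith [sigmoid_lt_one u]
  have e1 : Real.log (sigmoid u) = u / 2 - Real.log (2 * Real.cosh (u / 2)) := by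
    have : sigmoid u = Real.exp (u / 2) / (2 * Real.cosh (u / 2)) := by
      rw [sigmoid_def, Real.cosh_eq, ← one_div, div_eq_div_iff (by positivity) (by positivity)]
      have : Real.exp (u / 2) * Real.exp (-u) = Real.exp (-(u / 2)) := by
        rw [← Real.exp_add]; ring_nf
      linear_combination -this
    rw [this, Real.log_div (by positivity) (by positivity), Real.log_exp]
  have e2 : Real.log (1 - sigmoid u) = -(u / 2) - Real.log (2 * Real.cosh (u / 2)) := by
    have : 1 - sigmoid u = Real.exp (-(u / 2)) / (2 * Real.cosh (u / 2)) := by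
      rw [← sigmoid_neg, sigmoid_def, Real.cosh_eq, ← one_div,
        div_eq_div_iff (by positivity) (by positivity)]
      have : Real.exp (-(u / 2)) * Real.exp (- -u) = Real.exp (u / 2) := by
        rw [← Real.exp_add]; ring_nf
      linear_combination -this
    rw [this, Real.log_div (by positivity) (by positivity), Real.log_exp]
  have h1' : ((1 : ℂ) - (sigmoid u : ℂ)) = ((1 - sigmoid u : ℝ) : ℂ) := by push_cast; rfl
  have hc : (0 : ℝ) < 2 * Real.cosh (u / 2) := by positivity
  have hcc : (2 : ℂ) * Complex.cosh (u / 2) = Complex.exp (Real.log (2 * Real.cosh (u / 2))) := by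
    rw [← Complex.ofReal_exp, Real.exp_log hc]; push_cast; rfl
  have habs : |sigmoid u * (1 - sigmoid u)| =
      Real.exp (Real.log (sigmoid u) + Real.log (1 - sigmoid u)) := by
    rw [Real.exp_add, Real.exp_log h0, Real.exp_log h1, abs_of_pos (by positivity)]
  have hr : (1/2 : ℂ) * (Complex.exp (w * u) / Complex.cosh (u / 2)) =
      Complex.exp (w * u) / (2 * Complex.cosh (u / 2)) := by
    rw [mul_comm (2 : ℂ), ← div_div]; ring
  rw [hr, hcc, h1', Complex.cpow_def_of_ne_zero (by exact_mod_cast h0.ne'),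
    Complex.cpow_def_of_ne_zero (by exact_mod_cast h1.ne'), ← Complex.ofReal_log h0.le,
    ← Complex.ofReal_log h1.le, habs, Complex.real_smul, Complex.ofReal_exp, ← Complex.exp_sub,
    ← Complex.exp_add, ← Complex.exp_add, e1, e2]
  congr 1
  push_cast
  ring

/-- The reflection formula for the Gamma function, with `w` measured from the symmetric point
`1 / 2` so that the strip of convergence is centred at the origin. -/
lemma sech_half_laplace (w : ℂ) (hw : |w.re| < 1/2) :
    Integrable (fun u : ℝ => Complex.exp (w * u) / Complex.cosh (u / 2)) ∧
    ∫ u : ℝ, Complex.exp (w * u) / Complex.cosh (u / 2) = 2 * π / Complex.cos (π * w) := by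
  obtain ⟨hw1, hw2⟩ := abs_lt.1 hw
  have hs : 0 < (w + 1/2).re := by simp; linarith
  have ht : 0 < (1/2 - w).re := by simp; linarith
  have hconv := Complex.betaIntegral_convergent hs ht
  have hG := Complex.Gamma_mul_Gamma_eq_betaIntegral hs ht
  have himg : Set.Ioo (0:ℝ) 1 = sigmoid '' Set.univ := by rw [Set.image_univ, range_sigmoid]
  rw [intervalIntegrable_iff_integrableOn_Ioo_of_le zero_le_one, himg,
    integrableOn_image_iff_integrableOn_abs_deriv_smul MeasurableSet.univ
      (fun x _ => (hasDerivAt_sigmoid x).hasDerivWithinAt) sigmoid_injective.injOn] at hconv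
  rw [Complex.betaIntegral, intervalIntegral.integral_of_le zero_le_one,
    integral_Ioc_eq_integral_Ioo, himg,
    integral_image_eq_integral_abs_deriv_smul MeasurableSet.univ
      (fun x _ => (hasDerivAt_sigmoid x).hasDerivWithinAt) sigmoid_injective.injOn] at hG
  simp only [sigmoid_beta_integrand, integrableOn_univ, Measure.restrict_univ] at hconv hG
  rw [integral_const_mul, show w + 1/2 + (1/2 - w) = 1 by ring, Complex.Gamma_one,
    show 1/2 - w = 1 - (w + 1/2) by ring, Complex.Gamma_mul_Gamma_one_sub,
    show π * (w + 1/2) = π * w + π / 2 by ring, Complex.sin_add_pi_div_two] at hG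
  refine ⟨?_, by linear_combination -2 * hG⟩
  have := hconv.const_mul 2
  simpa [← mul_assoc] using this

/-- The bilateral Laplace transform of `1 / cosh (k x)`. -/
lemma sech_laplace (k : ℝ) (hk : 0 < k) (z : ℂ) (hz : |z.re| < k) :
    Integrable (fun x : ℝ => Complex.exp (z * x) / Complex.cosh (k * x)) ∧
    ∫ x : ℝ, Complex.exp (z * x) / Complex.cosh (k * x) =
      π / k / Complex.cos (π * z / (2 * k)) := by
  have hk' : (k : ℂ) ≠ 0 := by exact_mod_cast hk.ne'
  have hw : |(z / ((2 * k : ℝ) : ℂ)).re| < 1/2 := by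
    rw [Complex.div_ofReal_re, abs_div, abs_of_pos (by positivity : 0 < 2 * k),
      div_lt_iff₀ (by positivity)]
    linarith
  obtain ⟨h1, h2⟩ := sech_half_laplace _ hw
  have hfun : (fun x : ℝ => Complex.exp (z * x) / Complex.cosh (k * x)) = fun x : ℝ =>
      (fun u : ℝ => Complex.exp (z / ((2 * k : ℝ) : ℂ) * u) / Complex.cosh (u / 2))
        ((2 * k) * x) := by
    funext x
    simp only
    push_cast
    congr 2 <;> field_simp
  rw [hfun]
  refine ⟨h1.comp_mul_left' (by positivity), ?_⟩
  rw [Measure.integral_comp_mul_left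
    (fun u : ℝ => Complex.exp (z / ((2 * k : ℝ) : ℂ) * u) / Complex.cosh (u / 2)), h2,
    abs_of_pos (by positivity), Complex.real_smul]
  push_cast
  rw [mul_div_assoc (π : ℂ) z]
  field_simp

/-- Real and imaginary parts of `sech_laplace`. -/
lemma sech_laplace_real (k : ℝ) (hk : 0 < k) (c ω : ℝ) (hc : |c| < k) :
    (Integrable (fun x : ℝ => Real.exp (c * x) * Real.cos (ω * x) / Real.cosh (k * x)) ∧
    ∫ x : ℝ, Real.exp (c * x) * Real.cos (ω * x) / Real.cosh (k * x) =
      (π / k / Complex.cos (π * (c + ω * Complex.I) / (2 * k))).re) ∧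
    (Integrable (fun x : ℝ => Real.exp (c * x) * Real.sin (ω * x) / Real.cosh (k * x)) ∧
    ∫ x : ℝ, Real.exp (c * x) * Real.sin (ω * x) / Real.cosh (k * x) =
      (π / k / Complex.cos (π * (c + ω * Complex.I) / (2 * k))).im) := by
  obtain ⟨h1, h2⟩ := sech_laplace k hk (c + ω * Complex.I) (by simpa using hc)
  have hre : ∀ x : ℝ, Real.exp (c * x) * Real.cos (ω * x) / Real.cosh (k * x) =
      RCLike.re (Complex.exp ((c + ω * Complex.I) * x) / Complex.cosh (k * x)) := by
    intro x
    rw [← Complex.ofReal_mul k x, ← Complex.ofReal_cosh]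
    simp only [RCLike.re_eq_complex_re, Complex.div_ofReal_re, Complex.exp_re]
    simp
  have him : ∀ x : ℝ, Real.exp (c * x) * Real.sin (ω * x) / Real.cosh (k * x) =
      RCLike.im (Complex.exp ((c + ω * Complex.I) * x) / Complex.cosh (k * x)) := by
    intro x
    rw [← Complex.ofReal_mul k x, ← Complex.ofReal_cosh]
    simp only [RCLike.im_eq_complex_im, Complex.div_ofReal_im, Complex.exp_im]
    simp
  simp only [hre, him]
  refine ⟨⟨h1.re, ?_⟩, h1.im, ?_⟩
  · rw [integral_re h1, h2]; rfl
  · rw [integral_im h1, h2]; rfl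

lemma integrable_cos_sech (k : ℝ) (hk : 0 < k) (ω : ℝ) :
    Integrable (fun x : ℝ => Real.cos (ω * x) / Real.cosh (k * x)) := by
  simpa using (sech_laplace_real k hk 0 ω (by simpa using hk)).1.1

lemma cos_zero_add_mul_I (k ω : ℝ) :
    Complex.cos (π * ((0 : ℝ) + ω * Complex.I) / (2 * k)) = (Real.cosh (π * ω / (2 * k)) : ℝ) := by
  rw [Complex.ofReal_cosh, ← Complex.cos_mul_I]
  congr 1
  push_cast
  ring

lemma integral_cos_sech (k : ℝ) (hk : 0 < k) (ω : ℝ) :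
    ∫ x : ℝ, Real.cos (ω * x) / Real.cosh (k * x) = π / k / Real.cosh (π * ω / (2 * k)) := by
  have := (sech_laplace_real k hk 0 ω (by simpa using hk)).1.2
  rw [cos_zero_add_mul_I] at this
  simp only [zero_mul, Real.exp_zero, one_mul] at this
  rw [this]
  norm_cast

lemma integrable_sin_sech (k : ℝ) (hk : 0 < k) (ω : ℝ) :
    Integrable (fun x : ℝ => Real.sin (ω * x) / Real.cosh (k * x)) := by
  simpa using (sech_laplace_real k hk 0 ω (by simpa using hk)).2.1

lemma integral_sin_sech (k : ℝ) (hk : 0 < k) (ω : ℝ) :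
    ∫ x : ℝ, Real.sin (ω * x) / Real.cosh (k * x) = 0 := by
  have := (sech_laplace_real k hk 0 ω (by simpa using hk)).2.2
  rw [cos_zero_add_mul_I] at this
  simp only [zero_mul, Real.exp_zero, one_mul] at this
  rw [this]
  norm_cast

/-- Translating `sech` by `b` multiplies its cosine transform by `cos (a b)`, since the sine
transform vanishes. -/
lemma cos_sech_shift (k : ℝ) (hk : 0 < k) (a b : ℝ) :
    Integrable (fun x : ℝ => Real.cos (a * x) / Real.cosh (k * (x - b))) ∧
    ∫ x : ℝ, Real.cos (a * x) / Real.cosh (k * (x - b)) =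
      Real.cos (a * b) * (π / k / Real.cosh (π * a / (2 * k))) := by
  have hfun : (fun x : ℝ => Real.cos (a * x) / Real.cosh (k * (x - b))) = fun x : ℝ =>
      (fun v : ℝ => Real.cos (a * b) * (Real.cos (a * v) / Real.cosh (k * v)) -
        Real.sin (a * b) * (Real.sin (a * v) / Real.cosh (k * v))) (x - b) := by
    funext x
    rw [show a * x = a * b + a * (x - b) by ring, Real.cos_add]
    ring
  have i1 := (integrable_cos_sech k hk a).const_mul (Real.cos (a * b))
  have i2 := (integrable_sin_sech k hk a).const_mul (Real.sin (a * b))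
  rw [hfun]
  refine ⟨(i1.sub i2).comp_sub_right b, ?_⟩
  rw [integral_sub_right_eq_self (fun v : ℝ => Real.cos (a * b) * (Real.cos (a * v) /
    Real.cosh (k * v)) - Real.sin (a * b) * (Real.sin (a * v) / Real.cosh (k * v))),
    integral_sub i1 i2, integral_const_mul, integral_const_mul, integral_cos_sech k hk,
    integral_sin_sech k hk]
  ring

/-- The transform at `z = ± p / 2 + i a`. The factor `√2` comes from `cos (π / 4)`, and
`cosh (π a / p)` from `|cos (π / 4 + i θ)| ^ 2 = cosh (2 θ) / 2`. -/
lemma exp_half_cos_sech (p : ℝ) (hp : 0 < p) (a : ℝ) (c : ℝ) (hc : c = p / 2 ∨ c = -(p / 2)) :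
    Integrable (fun x : ℝ => Real.exp (c * x) * Real.cos (a * x) / Real.cosh (p * x)) ∧
    ∫ x : ℝ, Real.exp (c * x) * Real.cos (a * x) / Real.cosh (p * x) =
      π / p * (Real.sqrt 2 * Real.cosh (π * a / (2 * p)) / Real.cosh (π * a / p)) := by
  have hcp : |c| < p := by
    rcases hc with rfl | rfl
    · rw [abs_of_pos (by positivity)]; linarith
    · rw [abs_neg, abs_of_pos (by positivity)]; linarith
  obtain ⟨h1, h2⟩ := (sech_laplace_real p hp c a hcp).1
  refine ⟨h1, h2.trans ?_⟩
  -- The sign of `c` only affects the imaginary part of the cosine.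
  obtain ⟨ε, hε, hcos⟩ : ∃ ε : ℝ, ε ^ 2 = 1 ∧
      Complex.cos (π * (c + a * Complex.I) / (2 * p)) =
        ((Real.sqrt 2 / 2 * Real.cosh (π * a / (2 * p)) : ℝ) : ℂ) -
        ((ε * (Real.sqrt 2 / 2) * Real.sinh (π * a / (2 * p)) : ℝ) : ℂ) * Complex.I := by
    have hp' : (p : ℂ) ≠ 0 := by exact_mod_cast hp.ne'
    have e1 : Complex.cos ((π / 4 : ℝ) : ℂ) = ((Real.sqrt 2 / 2 : ℝ) : ℂ) := by
      rw [← Complex.ofReal_cos, Real.cos_pi_div_four]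
    have e2 : Complex.sin ((π / 4 : ℝ) : ℂ) = ((Real.sqrt 2 / 2 : ℝ) : ℂ) := by
      rw [← Complex.ofReal_sin, Real.sin_pi_div_four]
    rcases hc with rfl | rfl
    · refine ⟨1, by norm_num, ?_⟩
      rw [show (π * ((p / 2 : ℝ) + a * Complex.I) / (2 * p) : ℂ) =
        ((π / 4 : ℝ) : ℂ) + ((π * a / (2 * p) : ℝ) : ℂ) * Complex.I by push_cast; field_simp; ring,
        Complex.cos_add, e1, e2, Complex.cos_mul_I, Complex.sin_mul_I]
      push_cast
      ring
    · refine ⟨-1, by norm_num, ?_⟩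
      rw [show (π * ((-(p / 2) : ℝ) + a * Complex.I) / (2 * p) : ℂ) =
        -((π / 4 : ℝ) : ℂ) + ((π * a / (2 * p) : ℝ) : ℂ) * Complex.I by push_cast; field_simp; ring,
        Complex.cos_add, Complex.cos_neg, Complex.sin_neg, e1, e2, Complex.cos_mul_I,
        Complex.sin_mul_I]
      push_cast
      ring
  have hsq : Real.sqrt 2 ^ 2 = 2 := Real.sq_sqrt (by norm_num)
  have hch : Real.cosh (π * a / p) =
      Real.cosh (π * a / (2 * p)) ^ 2 + Real.sinh (π * a / (2 * p)) ^ 2 := by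
    rw [← Real.cosh_two_mul]; congr 1; field_simp
  rw [hcos, ← Complex.ofReal_div, Complex.div_re, hch]
  generalize hC : Real.cosh (π * a / (2 * p)) = C
  generalize Real.sinh (π * a / (2 * p)) = S
  have hC0 : 0 < C := hC ▸ Real.cosh_pos _
  have hn : Complex.normSq (((Real.sqrt 2 / 2 * C : ℝ) : ℂ) -
        ((ε * (Real.sqrt 2 / 2) * S : ℝ) : ℂ) * Complex.I) = (C ^ 2 + S ^ 2) / 2 := by
    rw [Complex.normSq_apply]
    simp only [Complex.sub_re, Complex.sub_im, Complex.ofReal_re, Complex.ofReal_im,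
      Complex.mul_re, Complex.mul_im, Complex.I_re, Complex.I_im]
    linear_combination (C ^ 2 + ε ^ 2 * S ^ 2) / 4 * hsq + S ^ 2 / 2 * hε
  rw [hn]
  have : C ^ 2 + S ^ 2 ≠ 0 := by positivity
  simp only [Complex.sub_re, Complex.sub_im, Complex.ofReal_re, Complex.ofReal_im,
      Complex.mul_re, Complex.mul_im, Complex.I_re, Complex.I_im]
  field_simp
  ring

/-- The partial fraction decomposition behind the evaluation of the outer integral. -/
lemma sech_mul_sech (u β : ℝ) :
    1 / (Real.cosh u * Real.cosh ((u - β) / 2)) =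
      (1 / Real.cosh β) * (2 * Real.cosh ((u + β) / 2) / Real.cosh u -
        1 / Real.cosh ((u - β) / 2)) := by
  have h1 := Real.cosh_pos u
  have h2 := Real.cosh_pos β
  have h3 := Real.cosh_pos ((u - β) / 2)
  have key : Real.cosh β + Real.cosh u =
      2 * Real.cosh ((u + β) / 2) * Real.cosh ((u - β) / 2) := by
    have e1 := Real.cosh_add ((u + β) / 2) ((u - β) / 2)
    have e2 := Real.cosh_sub ((u + β) / 2) ((u - β) / 2)
    rw [show (u + β) / 2 + (u - β) / 2 = u by ring] at e1
    rw [show (u + β) / 2 - (u - β) / 2 = β by ring] at e2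
    linarith
  field_simp
  linarith

/-- The value is even in `b`, so the two summands of `inner_integral` contribute equally. -/
lemma outer_integral (p : ℝ) (hp : 0 < p) (a b : ℝ) :
    Integrable (fun x : ℝ => Real.cos (a * x) /
      (Real.cosh (p * x) * Real.cosh (p / 2 * (x - b)))) ∧
    ∫ x : ℝ, Real.cos (a * x) / (Real.cosh (p * x) * Real.cosh (p / 2 * (x - b))) =
      2 * π / p * (Real.sqrt 2 * (Real.cosh (π * a / (2 * p)) * Real.cosh (p * b / 2)) /
          (Real.cosh (π * a / p) * Real.cosh (p * b))
        - Real.cos (a * b) / (Real.cosh (π * a / p) * Real.cosh (p * b))) := by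
  obtain ⟨i1, h1⟩ := exp_half_cos_sech p hp a _ (Or.inl rfl)
  obtain ⟨i2, h2⟩ := exp_half_cos_sech p hp a _ (Or.inr rfl)
  obtain ⟨i3, h3⟩ := cos_sech_shift (p / 2) (by positivity) a b
  have hfun : (fun x : ℝ => Real.cos (a * x) /
      (Real.cosh (p * x) * Real.cosh (p / 2 * (x - b)))) = fun x : ℝ => (1 / Real.cosh (p * b)) *
      ((Real.exp (p * b / 2) * (Real.exp (p / 2 * x) * Real.cos (a * x) / Real.cosh (p * x)) +
      Real.exp (-(p * b / 2)) * (Real.exp (-(p / 2) * x) * Real.cos (a * x) / Real.cosh (p * x))) -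
      Real.cos (a * x) / Real.cosh (p / 2 * (x - b))) := by
    funext x
    have h := sech_mul_sech (p * x) (p * b)
    rw [show (p * x - p * b) / 2 = p / 2 * (x - b) by ring, Real.cosh_eq ((p * x + p * b) / 2),
      show (p * x + p * b) / 2 = p * b / 2 + p / 2 * x by ring, Real.exp_add,
      show -(p * b / 2 + p / 2 * x) = -(p * b / 2) + -(p / 2) * x by ring, Real.exp_add] at h
    linear_combination Real.cos (a * x) * h
  rw [hfun]
  have i12 := (i1.const_mul (Real.exp (p * b / 2))).add (i2.const_mul (Real.exp (-(p * b / 2))))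
  refine ⟨(i12.sub i3).const_mul _, ?_⟩
  have e := integral_sub i12 i3
  have e' := integral_add (i1.const_mul (Real.exp (p * b / 2)))
    (i2.const_mul (Real.exp (-(p * b / 2))))
  simp only [Pi.add_apply] at e
  rw [integral_const_mul, e, e', integral_const_mul, integral_const_mul, h1, h2, h3,
    Real.cosh_eq (p * b / 2), show π * a / (2 * (p / 2)) = π * a / p by ring]
  have := Real.cosh_pos (π * a / p)
  have := Real.cosh_pos (p * b)
  field_simp

lemma integral_Ioi_of_even (f : ℝ → ℝ) (hf : ∀ x, f (-x) = f x) :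
    ∫ x in Set.Ioi (0:ℝ), f x = (∫ x, f x) / 2 := by
  have h := integral_comp_abs (f := f)
  have : (fun x => f |x|) = f := by
    funext x
    rcases abs_choice x with h | h <;> rw [h]
    exact hf x
  rw [this] at h
  linarith

lemma inner_integral (p : ℝ) (hp : 0 < p) (x b : ℝ) :
    ∫ y in Set.Ioi (0:ℝ), Real.cos (x * y) * Real.cos (b * y) / Real.cosh (π / p * y) =
      p / 4 * (1 / Real.cosh (p / 2 * (x - b)) + 1 / Real.cosh (p / 2 * (x - -b))) := by
  have hk : 0 < π / p := by positivity
  have i1 := (integrable_cos_sech _ hk (x - b)).const_mul (1/2)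
  have i2 := (integrable_cos_sech _ hk (x + b)).const_mul (1/2)
  rw [integral_Ioi_of_even]
  · have hfun : (fun y : ℝ => Real.cos (x * y) * Real.cos (b * y) / Real.cosh (π / p * y)) =
        fun y : ℝ => 1/2 * (Real.cos ((x - b) * y) / Real.cosh (π / p * y)) +
          1/2 * (Real.cos ((x + b) * y) / Real.cosh (π / p * y)) := by
      funext y
      rw [sub_mul, add_mul, Real.cos_add, Real.cos_sub]
      ring
    rw [hfun, integral_add i1 i2, integral_const_mul, integral_const_mul,
      integral_cos_sech _ hk, integral_cos_sech _ hk, sub_neg_eq_add,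
      show π * (x - b) / (2 * (π / p)) = p / 2 * (x - b) by field_simp,
      show π * (x + b) / (2 * (π / p)) = p / 2 * (x + b) by field_simp]
    field_simp
    ring
  · intro y
    simp only [mul_neg, Real.cos_neg, Real.cosh_neg]

theorem stmt_7 (p : ℝ) (hp : 0 < p) (a b : ℝ) :
    2 / π *
      ∫ x in Set.Ioi (0:ℝ), ∫ y in Set.Ioi (0:ℝ),
        Real.cos (x * y) * Real.cos (a * x) * Real.cos (b * y) /
          (Real.cosh (p * x) * Real.cosh (π * y / p))
      = Real.sqrt 2 * (Real.cosh (π * a / (2 * p)) * Real.cosh (p * b / 2)) /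
          (Real.cosh (π * a / p) * Real.cosh (p * b))
        - Real.cos (a * b) / (Real.cosh (π * a / p) * Real.cosh (p * b)) := by
  have hin : ∀ x : ℝ, ∫ y in Set.Ioi (0:ℝ),
      Real.cos (x * y) * Real.cos (a * x) * Real.cos (b * y) /
        (Real.cosh (p * x) * Real.cosh (π * y / p)) =
      p / 4 * (Real.cos (a * x) / (Real.cosh (p * x) * Real.cosh (p / 2 * (x - b))) +
        Real.cos (a * x) / (Real.cosh (p * x) * Real.cosh (p / 2 * (x - -b)))) := by
    intro x
    have hfun : ∀ y : ℝ, Real.cos (x * y) * Real.cos (a * x) * Real.cos (b * y) /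
        (Real.cosh (p * x) * Real.cosh (π * y / p)) = Real.cos (a * x) / Real.cosh (p * x) *
        (Real.cos (x * y) * Real.cos (b * y) / Real.cosh (π / p * y)) := by
      intro y
      rw [show π * y / p = π / p * y by ring]
      ring
    simp only [hfun]
    rw [integral_const_mul, inner_integral p hp]
    ring
  simp only [hin]
  obtain ⟨i1, h1⟩ := outer_integral p hp a b
  obtain ⟨i2, h2⟩ := outer_integral p hp a (-b)
  simp only [mul_neg, Real.cos_neg, neg_div, Real.cosh_neg] at h2
  rw [integral_Ioi_of_even, integral_const_mul, integral_add i1 i2, h1, h2]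
  · field_simp
    ring
  · -- The reflection `x ↦ -x` exchanges the two summands.
    intro x
    have e : ∀ c : ℝ, Real.cosh (p / 2 * (-x - c)) = Real.cosh (p / 2 * (x - -c)) := by
      intro c
      rw [← Real.cosh_neg]
      congr 1
      ring
    rw [e, e, neg_neg, mul_neg, mul_neg, Real.cos_neg, Real.cosh_neg, add_comm]
end

section
/- For all real numbers a, b, the identity (2/π) · ∫₀^∞ ∫₀^∞ cos(ax) cos(by) / (cosh(√π x) + cosh(√π y)) dx dy = 1 / (cosh(√π a) + cosh(√π b)) holds; that is, the function (x,y) ↦ 1/(cosh(√π x)+cosh(√π y)) is its own two-dimensional cosine Fourier transform. -/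
open Real MeasureTheory

/-!
The kernel factors after a rotation of the plane: with `x = p + q`, `y = p - q`,
`cosh (√π x) + cosh (√π y) = 2 cosh (√π p) cosh (√π q)`. The integrand is even in `x` and in `y`, so
the integral over the quadrant is a quarter of the integral over the plane, and up to terms odd in
`p` or `q` the numerator `cos (a x) cos (b y)` becomes
`(cos (A p) cos (B q) + cos (B p) cos (A q)) / 2` with `A = a + b`, `B = a - b`. The double integral
therefore reduces to the product of the one-dimensional transforms at `A` and `B`
(`integral_integral_kernel`), each given by
`∫ cos (t x) / cosh (√π x) dx = √π / cosh (√π t / 2)` (`integral_cos_div_cosh`), and the product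
`cosh (√π A / 2) cosh (√π B / 2)` recombines into `(cosh (√π a) + cosh (√π b)) / 2` by the same
addition formula.

The one-dimensional transform is the beta integral `B(1/2 + i s, 1/2 - i s)` under the logistic
substitution `x = 1 / (1 + exp (-w))`, evaluated by the reflection formula
`Γ(z) Γ(1 - z) = π / sin (π z)`.
-/

/-- The logistic substitution, Jacobian included, turns the integrand of the beta integral
`B(1/2 + i s, 1/2 - i s)` into `exp (i s w) / (2 cosh (w / 2))`. -/
lemma beta_integrand_comp_sigmoid (s w : ℝ) :
    |sigmoid w * (1 - sigmoid w)| • (((sigmoid w : ℝ) : ℂ) ^ ((1 / 2 + s * Complex.I : ℂ) - 1) *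
      (1 - ((sigmoid w : ℝ) : ℂ)) ^ ((1 / 2 - s * Complex.I : ℂ) - 1))
      = Complex.exp ((s * w : ℝ) * Complex.I) / ((2 * cosh (w / 2) : ℝ) : ℂ) := by
  have hp := sigmoid_pos w
  have hq : 0 < 1 - sigmoid w := by linarith [sigmoid_lt_one w]
  have hlog : log (1 - sigmoid w) = log (sigmoid w) - w := by
    rw [← sigmoid_neg, ← sigmoid_mul_rexp_neg, log_mul hp.ne' (exp_pos _).ne', log_exp]; ring
  -- Since the two exponents add up to `1`, the modulus of the integrand is
  -- `√(σ (1 - σ)) = σ exp (-w / 2)`.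
  have hkey : sigmoid w * exp (-(w / 2)) = (2 * cosh (w / 2))⁻¹ := by
    have h2 : exp (-w) = exp (-(w / 2)) * exp (-(w / 2)) := by rw [← exp_add]; ring_nf
    have h3 : exp (w / 2) * exp (-(w / 2)) = 1 := by rw [← exp_add]; simp
    have h1 : 2 * cosh (w / 2) = exp (w / 2) + exp (-(w / 2)) := by rw [cosh_eq]; ring
    rw [h1, sigmoid_def, h2]
    have := exp_pos (w / 2)
    have := exp_pos (-(w / 2))
    field_simp
    linear_combination h3
  have hqC : (1 - ((sigmoid w : ℝ) : ℂ)) = ((1 - sigmoid w : ℝ) : ℂ) := by push_cast; rfl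
  rw [abs_of_pos (mul_pos hp hq), hqC,
    Complex.cpow_def_of_ne_zero (by exact_mod_cast hp.ne'),
    Complex.cpow_def_of_ne_zero (by exact_mod_cast hq.ne'),
    ← Complex.ofReal_log hp.le, ← Complex.ofReal_log hq.le, div_eq_mul_inv (Complex.exp _),
    ← Complex.ofReal_inv,
    ← hkey, Complex.real_smul]
  have e1 : ((sigmoid w * (1 - sigmoid w) : ℝ) : ℂ)
      = Complex.exp ((log (sigmoid w) + log (1 - sigmoid w) : ℝ) : ℂ) := by
    rw [← Complex.ofReal_exp, exp_add, exp_log hp, exp_log hq]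
  have e2 : ((sigmoid w * exp (-(w / 2)) : ℝ) : ℂ)
      = Complex.exp ((log (sigmoid w) + -(w / 2) : ℝ) : ℂ) := by
    rw [← Complex.ofReal_exp, exp_add, exp_log hp]
  rw [e1, e2, ← Complex.exp_add, ← Complex.exp_add, ← Complex.exp_add, hlog]
  congr 1
  push_cast
  ring

lemma integral_cexp_div_two_cosh (s : ℝ) :
    ∫ w : ℝ, Complex.exp ((s * w : ℝ) * Complex.I) / ((2 * cosh (w / 2) : ℝ) : ℂ)
      = ((π / cosh (π * s) : ℝ) : ℂ) := by
  have hB := Complex.Gamma_mul_Gamma_eq_betaIntegral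
    (s := 1 / 2 + s * Complex.I) (t := 1 / 2 - s * Complex.I) (by simp) (by simp)
  have hsum : (1 / 2 + s * Complex.I : ℂ) + (1 / 2 - s * Complex.I) = 1 := by ring
  have hsub : (1 / 2 - s * Complex.I : ℂ) = 1 - (1 / 2 + s * Complex.I) := by ring
  have hsin : Complex.sin (π * (1 / 2 + s * Complex.I)) = ((cosh (π * s) : ℝ) : ℂ) := by
    rw [show (π : ℂ) * (1 / 2 + s * Complex.I) = (π * s : ℂ) * Complex.I + π / 2 by ring,
      Complex.sin_add_pi_div_two, Complex.cos_mul_I]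
    push_cast; rfl
  rw [hsum, Complex.Gamma_one, one_mul] at hB
  have hG : Complex.betaIntegral (1 / 2 + s * Complex.I) (1 / 2 - s * Complex.I)
      = ((π / cosh (π * s) : ℝ) : ℂ) := by
    rw [← hB, hsub, Complex.Gamma_mul_Gamma_one_sub, hsin]
    push_cast; rfl
  rw [← hG, Complex.betaIntegral, intervalIntegral.integral_of_le zero_le_one,
    integral_Ioc_eq_integral_Ioo, ← range_sigmoid, ← Set.image_univ,
    integral_image_eq_integral_abs_deriv_smul MeasurableSet.univ
      (fun x _ => (hasDerivAt_sigmoid x).hasDerivWithinAt) sigmoid_injective.injOn,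
    setIntegral_univ]
  exact integral_congr_ae (.of_forall fun w => (beta_integrand_comp_sigmoid s w).symm)

lemma integral_cexp_div_cosh (t : ℝ) :
    ∫ x : ℝ, Complex.exp ((t * x : ℝ) * Complex.I) / ((cosh (√π * x) : ℝ) : ℂ)
      = ((√π / cosh (√π * t / 2) : ℝ) : ℂ) := by
  have hc : 0 < √π := sqrt_pos.2 pi_pos
  have hcc : √π * √π = π := mul_self_sqrt pi_pos.le
  have h := Measure.integral_comp_mul_left
    (fun w : ℝ => Complex.exp ((t / (2 * √π) * w : ℝ) * Complex.I) / ((2 * cosh (w / 2) : ℝ) : ℂ))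
    (2 * √π)
  rw [integral_cexp_div_two_cosh] at h
  have h2 : ∀ x : ℝ, Complex.exp ((t * x : ℝ) * Complex.I) / ((cosh (√π * x) : ℝ) : ℂ)
      = 2 * (Complex.exp ((t / (2 * √π) * (2 * √π * x) : ℝ) * Complex.I) /
        ((2 * cosh (2 * √π * x / 2) : ℝ) : ℂ)) := fun x => by
    rw [show t / (2 * √π) * (2 * √π * x) = t * x by field_simp,
      show 2 * √π * x / 2 = √π * x by ring]
    push_cast
    field_simp
  simp_rw [h2]
  rw [integral_const_mul, h, abs_of_pos (by positivity), Complex.real_smul,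
    show π * (t / (2 * √π)) = √π * t / 2 by field_simp; linear_combination -t * hcc]
  have hne := (cosh_pos (√π * t / 2)).ne'
  rw [← Complex.ofReal_ofNat, ← Complex.ofReal_mul, ← Complex.ofReal_mul]
  congr 1
  field_simp
  linear_combination -hcc

/-- Integrability comes for free from the value of the integral: a non-integrable function would
have Bochner integral `0`, whereas the value just computed is positive. -/
lemma integrable_cexp_div_cosh (t : ℝ) : Integrable
    (fun x : ℝ => Complex.exp ((t * x : ℝ) * Complex.I) / ((cosh (√π * x) : ℝ) : ℂ)) := by
  by_contra h
  have h0 := (integral_cexp_div_cosh t).symm.trans (integral_undef h)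
  have : 0 < √π / cosh (√π * t / 2) := div_pos (sqrt_pos.2 pi_pos) (cosh_pos _)
  exact this.ne' (by exact_mod_cast h0)

lemma integrable_cos_div_cosh (t : ℝ) : Integrable fun x : ℝ => cos (t * x) / cosh (√π * x) := by
  refine (integrable_cexp_div_cosh t).re.congr (.of_forall fun x => ?_)
  simp [Complex.div_ofReal_re, Complex.exp_ofReal_mul_I_re, -Complex.ofReal_mul, -Complex.ofReal_cosh]

lemma integrable_sin_div_cosh (t : ℝ) : Integrable fun x : ℝ => sin (t * x) / cosh (√π * x) := by
  refine (integrable_cexp_div_cosh t).im.congr (.of_forall fun x => ?_)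
  simp [Complex.div_ofReal_im, Complex.exp_ofReal_mul_I_im, -Complex.ofReal_mul, -Complex.ofReal_cosh]

lemma integral_cos_div_cosh (t : ℝ) :
    ∫ x : ℝ, cos (t * x) / cosh (√π * x) = √π / cosh (√π * t / 2) := by
  have h := Complex.reCLM.integral_comp_comm (integrable_cexp_div_cosh t)
  rw [integral_cexp_div_cosh, Complex.reCLM_apply, Complex.ofReal_re] at h
  rw [← h]
  refine integral_congr_ae (.of_forall fun x => ?_)
  simp [Complex.div_ofReal_re, Complex.exp_ofReal_mul_I_re, -Complex.ofReal_mul, -Complex.ofReal_cosh]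

lemma integral_sin_div_cosh (t : ℝ) : ∫ x : ℝ, sin (t * x) / cosh (√π * x) = 0 := by
  have h := integral_neg_eq_self (fun x : ℝ => sin (t * x) / cosh (√π * x)) volume
  simp only [mul_neg, sin_neg, cosh_neg, neg_div, integral_neg] at h
  linarith

lemma cosh_add_cosh_eq (p q : ℝ) : cosh (p + q) + cosh (p - q) = 2 * (cosh p * cosh q) := by
  rw [cosh_add, cosh_sub]; ring

/-- Change of variables `x = p + q`, `y = p - q` (Jacobian `2`) in an iterated integral, done one
variable at a time: substitute `y = x - 2 q`, exchange the integrals, then substitute `x = p + q`. -/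
lemma integral_integral_rotate (G : ℝ → ℝ → ℝ)
    (hG : Integrable (fun z : ℝ × ℝ => G (z.1 + z.2) (z.1 - z.2)) (volume.prod volume)) :
    ∫ x, ∫ y, G x y = 2 * ∫ q, ∫ p, G (p + q) (p - q) := by
  have hin : ∀ x, ∫ y, G x y = 2 * ∫ q, G x (x - 2 * q) := fun x => by
    rw [Measure.integral_comp_mul_left (fun y => G x (x - y)) 2,
      integral_sub_left_eq_self (fun y => G x y) volume x]
    norm_num
    ring
  have hG' : Integrable (Function.uncurry fun x q : ℝ => G x (x - 2 * q))
      (volume.prod volume) := by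
    refine ((measurePreserving_sub_prod volume volume).integrable_comp_of_integrable hG).congr
      (.of_forall fun z => ?_)
    simp only [Function.comp_apply, Function.uncurry]
    ring_nf
  simp_rw [hin]
  rw [integral_const_mul, integral_integral_swap hG']
  congr 1
  refine integral_congr_ae (.of_forall fun q => ?_)
  simp only
  rw [← integral_add_right_eq_self _ q]
  refine integral_congr_ae (.of_forall fun p => ?_)
  simp only
  ring_nf

/-- In the rotated coordinates the integrand is a sum of products of a function of `p` and a
function of `q`; the two products of sines are odd in each variable and integrate to zero. -/
lemma kernel_rotate (a b p q : ℝ) :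
    cos (a * (p + q)) * cos (b * (p - q)) / (cosh (√π * (p + q)) + cosh (√π * (p - q)))
      = 1 / 4 * (cos ((a + b) * p) / cosh (√π * p) * (cos ((a - b) * q) / cosh (√π * q))
        - sin ((a + b) * p) / cosh (√π * p) * (sin ((a - b) * q) / cosh (√π * q))
        + cos ((a - b) * p) / cosh (√π * p) * (cos ((a + b) * q) / cosh (√π * q))
        - sin ((a - b) * p) / cosh (√π * p) * (sin ((a + b) * q) / cosh (√π * q))) := by
  have h1 := cos_add ((a + b) * p) ((a - b) * q)
  have h2 := cos_add ((a - b) * p) ((a + b) * q)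
  have h3 : 2 * (cos (a * (p + q)) * cos (b * (p - q)))
      = cos ((a + b) * p + (a - b) * q) + cos ((a - b) * p + (a + b) * q) := by
    rw [show (a + b) * p + (a - b) * q = a * (p + q) + b * (p - q) by ring,
      show (a - b) * p + (a + b) * q = a * (p + q) - b * (p - q) by ring, cos_add, cos_sub]
    ring
  have hp := (cosh_pos (√π * p)).ne'
  have hq := (cosh_pos (√π * q)).ne'
  rw [h1, h2] at h3
  rw [mul_add √π, mul_sub √π, cosh_add_cosh_eq]
  -- The trigonometric factors are made opaque so that normalization leaves their arguments alone.
  generalize cos ((a + b) * p) = c₁, cos ((a - b) * q) = c₂, cos ((a - b) * p) = c₃,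
    cos ((a + b) * q) = c₄, sin ((a + b) * p) = s₁, sin ((a - b) * q) = s₂,
    sin ((a - b) * p) = s₃, sin ((a + b) * q) = s₄, cos (a * (p + q)) = d₁,
    cos (b * (p - q)) = d₂, cosh (√π * p) = k₁, cosh (√π * q) = k₂ at *
  field_simp
  linear_combination 2 * h3

lemma integral_integral_kernel (a b : ℝ) :
    ∫ x, ∫ y, cos (a * x) * cos (b * y) / (cosh (√π * x) + cosh (√π * y))
      = 2 * π / (cosh (√π * a) + cosh (√π * b)) := by
  have hC := integrable_cos_div_cosh
  have hS := integrable_sin_div_cosh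
  rw [integral_integral_rotate
    (fun x y => cos (a * x) * cos (b * y) / (cosh (√π * x) + cosh (√π * y)))]
  · have hin : ∀ q, ∫ p, cos (a * (p + q)) * cos (b * (p - q)) /
        (cosh (√π * (p + q)) + cosh (√π * (p - q)))
        = 1 / 4 * (√π / cosh (√π * (a + b) / 2) * (cos ((a - b) * q) / cosh (√π * q))
          + √π / cosh (√π * (a - b) / 2) * (cos ((a + b) * q) / cosh (√π * q))) := fun q => by
      simp_rw [kernel_rotate]
      rw [integral_const_mul, integral_sub, integral_add, integral_sub]
      · simp only [integral_mul_const, integral_cos_div_cosh, integral_sin_div_cosh]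
        ring
      · exact (hC _).mul_const _
      · exact (hS _).mul_const _
      · exact ((hC _).mul_const _).sub ((hS _).mul_const _)
      · exact (hC _).mul_const _
      · exact (((hC _).mul_const _).sub ((hS _).mul_const _)).add ((hC _).mul_const _)
      · exact (hS _).mul_const _
    simp_rw [hin]
    rw [integral_const_mul, integral_add ((hC _).const_mul _) ((hC _).const_mul _),
      integral_const_mul, integral_const_mul, integral_cos_div_cosh, integral_cos_div_cosh]
    have hcc : √π * √π = π := mul_self_sqrt pi_pos.le
    have hsum := cosh_add_cosh_eq (√π * (a + b) / 2) (√π * (a - b) / 2)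
    rw [show √π * (a + b) / 2 + √π * (a - b) / 2 = √π * a by ring,
      show √π * (a + b) / 2 - √π * (a - b) / 2 = √π * b by ring] at hsum
    rw [hsum]
    have h1 := (cosh_pos (√π * (a + b) / 2)).ne'
    have h2 := (cosh_pos (√π * (a - b) / 2)).ne'
    -- Only the `π` of the right-hand side is split into `√π * √π`; the others are under the root.
    nth_rewrite 9 [← hcc]
    field_simp
    ring
  · simp_rw [kernel_rotate]
    exact (((((hC _).mul_prod (hC _)).sub ((hS _).mul_prod (hS _))).add
      ((hC _).mul_prod (hC _))).sub ((hS _).mul_prod (hS _))).const_mul _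

theorem stmt_9 (a b : ℝ) :
    2 / π *
      ∫ x in Set.Ioi (0:ℝ), ∫ y in Set.Ioi (0:ℝ),
        Real.cos (a * x) * Real.cos (b * y) /
          (Real.cosh (Real.sqrt π * x) + Real.cosh (Real.sqrt π * y))
      = 1 / (Real.cosh (Real.sqrt π * a) + Real.cosh (Real.sqrt π * b)) := by
  have hcos : ∀ t x : ℝ, cos (t * |x|) = cos (t * x) := fun t x => by
    rw [← cos_abs (t * |x|), ← cos_abs (t * x), abs_mul, abs_mul, abs_abs]
  have hcosh : ∀ x : ℝ, cosh (√π * |x|) = cosh (√π * x) := fun x => by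
    rw [← cosh_abs (√π * |x|), ← cosh_abs (√π * x), abs_mul, abs_mul, abs_abs]
  -- `integral_comp_abs` reads the half-line integral of an even function off the whole line.
  have hy : ∀ x : ℝ, ∫ y in Set.Ioi (0:ℝ),
      cos (a * x) * cos (b * y) / (cosh (√π * x) + cosh (√π * y))
      = 1 / 2 * ∫ y, cos (a * x) * cos (b * y) / (cosh (√π * x) + cosh (√π * y)) := fun x => by
    have h := integral_comp_abs
      (f := fun y => cos (a * x) * cos (b * y) / (cosh (√π * x) + cosh (√π * y)))
    simp only [hcos, hcosh] at h
    linarith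
  have hx := integral_comp_abs
    (f := fun x => ∫ y, cos (a * x) * cos (b * y) / (cosh (√π * x) + cosh (√π * y)))
  simp only [hcos, hcosh] at hx
  rw [integral_integral_kernel] at hx
  simp_rw [hy]
  rw [integral_const_mul, ← (div_eq_iff (two_ne_zero' ℝ)).2 (hx.trans (mul_comm _ _))]
  have hpos : 0 < cosh (√π * a) + cosh (√π * b) := add_pos (cosh_pos _) (cosh_pos _)
  field_simp
end

section
/- For all real numbers a, b, the identity (2/π) · ∫₀^∞ ∫₀^∞ (sin(xy) / (sinh(√π x) sinh(√π y))) · cos(ax) cos(by) dx dy = sin(ab) / (sinh(√π a) sinh(√π b)) holds (the right-hand side being interpreted by its continuous extension when a = 0 or b = 0); that is, the function (x,y) ↦ sin(xy)/(sinh(√π x) sinh(√π y)) is its own two-dimensional cosine Fourier transform. -/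
/-!
Write `c = √π` and `K_b(x) = c / (cosh (c x) + cosh (c b))`. The proof rests on the single integral
`∫₀^∞ sin (p y) cos (q y) / sinh (c y) dy = (c / 2) sinh (c p) / (cosh (c p) + cosh (c q))`
(`integral_sin_mul_cos_div_sinh`), used in two ways.

* With `(p, q) = (x, b)` it evaluates the inner integral. The factor `sinh (c x)` cancels, and the
  double integral becomes `½ ∫₀^∞ cos (a x) K_b(x) dx` (`lhs_eq`).
* With `(p, q) = (b, x)` it says that, for `b ≠ 0`, the even function `y ↦ g y b` has the cosine
  transform `2 ∫₀^∞ cos (x y) g y b dy = K_b(x)`. Fourier inversion then gives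
  `(1 / π) ∫₀^∞ cos (a x) K_b(x) dx = g a b` for every `a` (`inversion`).

The case `b = 0` follows because both sides are continuous in `b`.

The basic integral reduces, by the addition formulas for `sin` and `tanh`, to
`∫₀^∞ sin (t y) / sinh y dy = (π / 2) tanh (π t / 2)` (`integral_sin_div_sinh`). Since
`1 / sinh y = 2 / (e^y - 1) - 2 / (e^{2y} - 1)`, this comes from
`∫₀^∞ sin (t y) / (e^y - 1) dy = (π / 2) coth (π t) - 1 / (2 t)` (`integral_planck`), which is
obtained by expanding `1 / (e^y - 1)` in a geometric series, integrating termwise, and summing with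
the Mittag-Leffler expansion of the cotangent.
-/

open Real MeasureTheory

/-! ### The integral of `sin (t y) / (e^y - 1)` -/

lemma integral_sin_mul_exp_neg (t : ℝ) {k : ℝ} (hk : 0 < k) :
    ∫ y in Set.Ioi (0:ℝ), Real.sin (t * y) * Real.exp (-k * y) = t / (t ^ 2 + k ^ 2) := by
  have hre : (⟨-k, t⟩ : ℂ).re < 0 := by simpa using hk
  have h := integral_exp_mul_complex_Ioi hre 0
  have h2 := integral_im (𝕜 := ℂ) (integrableOn_exp_mul_complex_Ioi hre 0)
  rw [h] at h2
  have e : ∀ y : ℝ, RCLike.im (Complex.exp ((⟨-k, t⟩ : ℂ) * y)) =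
      Real.sin (t * y) * Real.exp (-k * y) := by
    intro y
    simp [Complex.exp_im, mul_comm]
  simp only [e] at h2
  rw [h2]
  simp [Complex.div_im, Complex.normSq_apply]
  ring

lemma integrableOn_sin_mul_exp_neg (t : ℝ) {k : ℝ} (hk : 0 < k) :
    IntegrableOn (fun y => Real.sin (t * y) * Real.exp (-k * y)) (Set.Ioi 0) := by
  refine Integrable.mono' (exp_neg_integrableOn_Ioi 0 hk) (by fun_prop) (ae_of_all _ fun y => ?_)
  rw [norm_mul, Real.norm_eq_abs, Real.norm_eq_abs, abs_of_pos (Real.exp_pos _)]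
  exact mul_le_of_le_one_left (Real.exp_pos _).le (Real.abs_sin_le_one _)

lemma abs_sin_mul_le (t : ℝ) {y : ℝ} (hy : 0 < y) : |Real.sin (t * y)| ≤ |t| * y :=
  Real.abs_sin_le_abs.trans (by rw [abs_mul, abs_of_pos hy])

/-- The partial fraction expansion of `coth`: the Mittag-Leffler series of the cotangent, evaluated
at the purely imaginary point `t * I`. -/
lemma tsum_coth {t : ℝ} (ht : t ≠ 0) :
    ∑' n : ℕ, t / (t ^ 2 + ((n : ℝ) + 1) ^ 2) =
      π / 2 * (Real.cosh (π * t) / Real.sinh (π * t)) - 1 / (2 * t) := by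
  have hz : (t * Complex.I : ℂ) ∈ Complex.integerComplement := by
    rintro ⟨n, hn⟩
    have := congrArg Complex.im hn
    simp at this
    exact ht this.symm
  have h := cot_series_rep' hz
  have hs : Real.sinh (π * t) ≠ 0 := by
    rw [Ne, Real.sinh_eq_zero]; exact mul_ne_zero pi_ne_zero ht
  have e : ∀ n : ℕ, (1 / ((t * Complex.I : ℂ) - (n + 1)) + 1 / ((t * Complex.I : ℂ) + (n + 1)))
      = (-2 * Complex.I) * ((t / (t ^ 2 + ((n : ℝ) + 1) ^ 2) : ℝ) : ℂ) := by
    intro n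
    have h1 : (t * Complex.I : ℂ) - (n + 1) ≠ 0 := fun h => ht (by simpa using congrArg Complex.im h)
    have h2 : (t * Complex.I : ℂ) + (n + 1) ≠ 0 := fun h => ht (by simpa using congrArg Complex.im h)
    have h3 : ((t : ℂ) ^ 2 + ((n : ℂ) + 1) ^ 2) ≠ 0 := by
      have : (t ^ 2 + ((n : ℝ) + 1) ^ 2) ≠ 0 := by positivity
      exact_mod_cast this
    push_cast
    field_simp
    linear_combination (2 * (t:ℂ)^3 * Complex.I ) * Complex.I_sq
  simp_rw [e] at h
  rw [tsum_mul_left, ← Complex.ofReal_tsum, Complex.cot_eq_cos_div_sin, ← mul_assoc,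
    Complex.cos_mul_I, Complex.sin_mul_I, ← Complex.ofReal_mul, ← Complex.ofReal_cosh,
    ← Complex.ofReal_sinh] at h
  have hsC : ((Real.sinh (π * t) : ℝ) : ℂ) ≠ 0 := by exact_mod_cast hs
  have htC : (t : ℂ) ≠ 0 := by exact_mod_cast ht
  have hI := Complex.I_ne_zero
  apply Complex.ofReal_injective
  push_cast
  push_cast at h hsC
  have h' := congrArg (fun z => Complex.I * z / 2) h
  have e2 : Complex.I * (-2 * Complex.I * ∑' n : ℕ, ((t:ℂ) / (t ^ 2 + ((n : ℂ) + 1) ^ 2))) / 2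
    = ∑' n : ℕ, ((t:ℂ) / (t ^ 2 + ((n : ℂ) + 1) ^ 2)) := by
    linear_combination (-∑' n : ℕ, ((t:ℂ) / (t ^ 2 + ((n : ℂ) + 1) ^ 2))) * Complex.I_sq
  rw [e2] at h'
  rw [← h']
  field_simp

lemma integral_planck {t : ℝ} (ht : t ≠ 0) :
    ∫ y in Set.Ioi (0:ℝ), Real.sin (t * y) / (Real.exp y - 1) =
      π / 2 * (Real.cosh (π * t) / Real.sinh (π * t)) - 1 / (2 * t) := by
  have hpos : ∀ n : ℕ, (0:ℝ) < n + 1 := fun n => by positivity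
  have h := hasSum_integral_of_summable_integral_norm
    (μ := volume.restrict (Set.Ioi (0:ℝ)))
    (F := fun (n : ℕ) y => Real.sin (t * y) * Real.exp (-((n:ℝ) + 1) * y))
    (fun n => integrableOn_sin_mul_exp_neg t (hpos n)) ?_
  · rw [← tsum_coth ht]
    simp_rw [fun n => integral_sin_mul_exp_neg t (hpos n)] at h
    rw [h.tsum_eq]
    refine setIntegral_congr_fun measurableSet_Ioi fun y hy => ?_
    simp only [Set.mem_Ioi] at hy
    have h1 : Real.exp (-y) < 1 := by simpa using hy
    have e : ∀ n : ℕ, Real.exp (-((n:ℝ) + 1) * y) = Real.exp (-y) * Real.exp (-y) ^ n := by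
      intro n
      rw [← Real.exp_nat_mul, ← Real.exp_add]; congr 1; ring
    simp only [e]
    rw [tsum_mul_left, tsum_mul_left, tsum_geometric_of_lt_one (Real.exp_pos _).le h1, Real.exp_neg]
    have : Real.exp y - 1 ≠ 0 := by
      have := Real.one_lt_exp_iff.2 hy
      linarith
    have := Real.exp_ne_zero y
    field_simp
  · have hsum : Summable fun n : ℕ => |t| * (1 / ((n:ℝ) + 1) ^ 2) := by
      refine Summable.mul_left _ ?_
      exact_mod_cast (summable_nat_add_iff 1).2 (Real.summable_one_div_nat_pow.2 one_lt_two)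
    refine hsum.of_nonneg_of_le (fun n => integral_nonneg fun y => norm_nonneg _) fun n => ?_
    have hI := Real.integral_rpow_mul_exp_neg_mul_Ioi (a := 2) two_pos (hpos n)
    -- The Gamma integral `hI` is nonzero, so its integrand cannot fail to be integrable.
    have hint : IntegrableOn (fun y : ℝ => y ^ ((2:ℝ) - 1) * Real.exp (-(((n:ℝ) + 1) * y)))
        (Set.Ioi 0) := by
      by_contra hc
      rw [integral_undef hc] at hI
      have : (0:ℝ) < (1 / ((n:ℝ) + 1)) ^ (2:ℝ) * Real.Gamma 2 :=
        mul_pos (by positivity) (Real.Gamma_pos_of_pos two_pos)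
      linarith
    have hG : Real.Gamma 2 = 1 := by simp
    calc ∫ y in Set.Ioi (0:ℝ), ‖Real.sin (t * y) * Real.exp (-((n:ℝ) + 1) * y)‖
        ≤ ∫ y in Set.Ioi (0:ℝ), |t| * (y ^ ((2:ℝ) - 1) * Real.exp (-(((n:ℝ) + 1) * y))) := by
          refine setIntegral_mono_on (integrableOn_sin_mul_exp_neg t (hpos n)).norm
            (hint.const_mul _) measurableSet_Ioi fun y hy => ?_
          have h1 : y ^ ((2:ℝ) - 1) = y := by norm_num
          rw [norm_mul, Real.norm_eq_abs, Real.norm_eq_abs, abs_of_pos (Real.exp_pos _), h1,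
            ← mul_assoc, neg_mul]
          exact mul_le_mul_of_nonneg_right (abs_sin_mul_le t hy) (Real.exp_pos _).le
      _ = |t| * (1 / ((n:ℝ) + 1) ^ 2) := by
          rw [integral_const_mul, hI, hG]
          norm_num

lemma integrableOn_planck (t : ℝ) :
    IntegrableOn (fun y => Real.sin (t * y) / (Real.exp y - 1)) (Set.Ioi 0) := by
  -- `y ≤ 2 * sinh (y / 2)` gives `y / (exp y - 1) ≤ exp (-y / 2)`.
  refine Integrable.mono' ((exp_neg_integrableOn_Ioi 0 (b := 1/2) (by norm_num)).const_mul |t|)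
    (Measurable.aestronglyMeasurable (by fun_prop)) ?_
  filter_upwards [ae_restrict_mem measurableSet_Ioi] with y hy
  simp only [Set.mem_Ioi] at hy
  have h0 : 0 < Real.exp y - 1 := by
    have := Real.one_lt_exp_iff.2 hy
    linarith
  rw [norm_div, Real.norm_eq_abs, Real.norm_eq_abs, abs_of_pos h0, div_le_iff₀ h0]
  refine (abs_sin_mul_le t hy).trans ?_
  rw [mul_assoc]
  refine mul_le_mul_of_nonneg_left ?_ (abs_nonneg _)
  have h1 : y / 2 ≤ Real.sinh (y / 2) := Real.self_le_sinh_iff.2 (by linarith)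
  rw [Real.sinh_eq] at h1
  have h2 : Real.exp (-(1/2) * y) * (Real.exp y - 1) = Real.exp (y/2) - Real.exp (-(y/2)) := by
    rw [mul_sub, ← Real.exp_add]; ring_nf
  linarith

/-! ### The integral of `sin (p y) cos (q y) / sinh (c y)` -/

lemma one_div_sinh_eq {y : ℝ} (hy : 0 < y) :
    1 / Real.sinh y = 2 * (1 / (Real.exp y - 1)) - 2 * (1 / (Real.exp (2 * y) - 1)) := by
  have h0 : Real.exp y - 1 ≠ 0 := by
    have := Real.one_lt_exp_iff.2 hy
    linarith
  have h1 : Real.exp y + 1 ≠ 0 := by positivity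
  have h2 : Real.exp (2 * y) - 1 = (Real.exp y - 1) * (Real.exp y + 1) := by
    rw [two_mul, Real.exp_add]; ring
  have h3 : Real.sinh y = (Real.exp y - 1) * (Real.exp y + 1) / (2 * Real.exp y) := by
    rw [Real.sinh_eq, Real.exp_neg]
    field_simp
    ring
  rw [h2, h3]
  field_simp
  ring

/-- The second term is written with `t / 2 * (2 * y)`, so that it is the integrand of
`integral_planck` at frequency `t / 2` after the substitution `y ↦ 2 * y`. -/
lemma sinh_decomp (t : ℝ) : Set.EqOn (fun y => Real.sin (t * y) / Real.sinh y)
    (fun y => 2 * (Real.sin (t * y) / (Real.exp y - 1)) -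
      2 * (Real.sin (t / 2 * (2 * y)) / (Real.exp (2 * y) - 1))) (Set.Ioi 0) := by
  intro y hy
  have h := one_div_sinh_eq hy
  have e : t / 2 * (2 * y) = t * y := by ring
  simp only [e]
  linear_combination Real.sin (t * y) * h

lemma integrableOn_planck_two (t : ℝ) : IntegrableOn
    (fun y => Real.sin (t / 2 * (2 * y)) / (Real.exp (2 * y) - 1)) (Set.Ioi 0) :=
  (integrableOn_Ioi_comp_mul_left_iff (fun y => Real.sin (t / 2 * y) / (Real.exp y - 1)) 0
    two_pos).2 (by simpa using integrableOn_planck (t / 2))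

lemma integrableOn_sin_div_sinh (t : ℝ) :
    IntegrableOn (fun y => Real.sin (t * y) / Real.sinh y) (Set.Ioi 0) :=
  IntegrableOn.congr_fun
    (((integrableOn_planck t).const_mul 2).sub ((integrableOn_planck_two t).const_mul 2))
    (sinh_decomp t).symm measurableSet_Ioi

lemma integral_sin_div_sinh (t : ℝ) :
    ∫ y in Set.Ioi (0:ℝ), Real.sin (t * y) / Real.sinh y = π / 2 * Real.tanh (π * t / 2) := by
  rcases eq_or_ne t 0 with rfl | ht
  · simp
  rw [setIntegral_congr_fun measurableSet_Ioi (sinh_decomp t),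
    integral_sub ((integrableOn_planck t).const_mul 2) ((integrableOn_planck_two t).const_mul 2),
    integral_const_mul, integral_const_mul, integral_planck ht,
    integral_comp_mul_left_Ioi (fun y => Real.sin (t / 2 * y) / (Real.exp y - 1)) 0 two_pos,
    mul_zero, integral_planck (div_ne_zero ht two_ne_zero)]
  set u := π * t / 2 with hu
  have e1 : π * t = 2 * u := by rw [hu]; ring
  have e2 : π * (t / 2) = u := by rw [hu]; ring
  have hs : Real.sinh u ≠ 0 := by
    rw [Ne, Real.sinh_eq_zero, hu]; positivity
  have hc := (Real.cosh_pos u).ne'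
  rw [e1, e2, Real.sinh_two_mul, Real.cosh_two_mul, Real.tanh_eq_sinh_div_cosh, smul_eq_mul]
  field_simp
  ring

lemma tanh_add_tanh (A B : ℝ) :
    Real.tanh A + Real.tanh B = 2 * Real.sinh (A + B) / (Real.cosh (A + B) + Real.cosh (A - B)) := by
  have hA := (Real.cosh_pos A).ne'
  have hB := (Real.cosh_pos B).ne'
  have h : Real.cosh (A + B) + Real.cosh (A - B) = 2 * (Real.cosh A * Real.cosh B) := by
    rw [Real.cosh_add, Real.cosh_sub]; ring
  rw [h, Real.sinh_add, Real.tanh_eq_sinh_div_cosh, Real.tanh_eq_sinh_div_cosh]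
  field_simp

lemma integrableOn_sin_div_sinh_scaled {c : ℝ} (hc : 0 < c) (t : ℝ) :
    IntegrableOn (fun y => Real.sin (t * y) / Real.sinh (c * y)) (Set.Ioi 0) := by
  have h := (integrableOn_Ioi_comp_mul_left_iff
    (fun y => Real.sin (t / c * y) / Real.sinh y) 0 hc).2
    (by simpa using integrableOn_sin_div_sinh (t / c))
  have e : ∀ y, t / c * (c * y) = t * y := fun y => by field_simp
  simpa only [e] using h

/-- With `c = √π`, the constant `π / (2 c)` becomes `c / 2`. -/
lemma integral_sin_div_sinh_scaled {c : ℝ} (hc : 0 < c) (hcc : c * c = π) (t : ℝ) :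
    ∫ y in Set.Ioi (0:ℝ), Real.sin (t * y) / Real.sinh (c * y) =
      c / 2 * Real.tanh (c * t / 2) := by
  have h := integral_comp_mul_left_Ioi (fun y => Real.sin (t / c * y) / Real.sinh y) 0 hc
  have e : ∀ y, t / c * (c * y) = t * y := fun y => by field_simp
  simp only [e, mul_zero, integral_sin_div_sinh] at h
  have e2 : π * (t / c) = c * t := by rw [← hcc]; field_simp
  rw [h, e2, smul_eq_mul, ← hcc]
  field_simp

lemma sin_mul_cos_div_eq (c p q y : ℝ) :
    Real.sin (p * y) * Real.cos (q * y) / Real.sinh (c * y) =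
      1 / 2 * (Real.sin ((p + q) * y) / Real.sinh (c * y)) +
        1 / 2 * (Real.sin ((p - q) * y) / Real.sinh (c * y)) := by
  rw [add_mul, sub_mul, Real.sin_add, Real.sin_sub]
  ring

/-- The integral that gives both the inner integral of the double integral and the cosine transform
of `y ↦ g y b`. -/
lemma integral_sin_mul_cos_div_sinh {c : ℝ} (hc : 0 < c) (hcc : c * c = π) (p q : ℝ) :
    ∫ y in Set.Ioi (0:ℝ), Real.sin (p * y) * Real.cos (q * y) / Real.sinh (c * y) =
      c / 2 * (Real.sinh (c * p) / (Real.cosh (c * p) + Real.cosh (c * q))) := by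
  simp_rw [sin_mul_cos_div_eq]
  rw [integral_add ((integrableOn_sin_div_sinh_scaled hc _).const_mul _)
    ((integrableOn_sin_div_sinh_scaled hc _).const_mul _), integral_const_mul, integral_const_mul,
    integral_sin_div_sinh_scaled hc hcc, integral_sin_div_sinh_scaled hc hcc]
  have h := tanh_add_tanh (c * (p + q) / 2) (c * (p - q) / 2)
  have e1 : c * (p + q) / 2 + c * (p - q) / 2 = c * p := by ring
  have e2 : c * (p + q) / 2 - c * (p - q) / 2 = c * q := by ring
  rw [e1, e2] at h
  linear_combination (c / 4) * h

/-! ### Fourier integrals of even functions -/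

lemma integrable_of_even {f : ℝ → ℝ} (hf : ∀ x, f (-x) = f x) (h : IntegrableOn f (Set.Ioi 0)) :
    Integrable f := by
  have int_Iic : IntegrableOn f (Set.Iic 0) := by
    rw [← Measure.map_neg_eq_self (volume : Measure ℝ)]
    let m : MeasurableEmbedding fun x : ℝ => -x := (Homeomorph.neg ℝ).measurableEmbedding
    rw [m.integrableOn_map_iff]
    simp_rw [Function.comp_def, hf, Set.neg_preimage, Set.neg_Iic, neg_zero]
    exact Iff.mpr integrableOn_Ici_iff_integrableOn_Ioi h
  rw [← integrableOn_univ, ← Set.Iic_union_Ioi (a := (0:ℝ))]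
  exact int_Iic.union h

/-- For an even function, the Fourier integral over the line is a cosine integral over the
half-line. -/
lemma integral_exp_smul_even {f : ℝ → ℝ} (hf : ∀ x, f (-x) = f x) (hi : Integrable f) (s : ℝ) :
    ∫ y : ℝ, Complex.exp (((s * y : ℝ) : ℂ) * Complex.I) • (f y : ℂ) =
      ((2 * ∫ y in Set.Ioi (0:ℝ), Real.cos (s * y) * f y : ℝ) : ℂ) := by
  set G : ℝ → ℂ := fun y => Complex.exp (((s * y : ℝ) : ℂ) * Complex.I) • (f y : ℂ) with hG
  have hGi : Integrable G := by
    refine Integrable.bdd_mul (c := 1) hi.ofReal (by fun_prop) (ae_of_all _ fun y => ?_)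
    rw [Complex.norm_exp_ofReal_mul_I]
  have hneg : ∫ y in Set.Iic (0:ℝ), G y = ∫ y in Set.Ioi (0:ℝ), G (-y) := by
    rw [integral_comp_neg_Ioi, neg_zero]
  have hGn : Integrable fun y => G (-y) := hGi.comp_neg
  rw [← intervalIntegral.integral_Iic_add_Ioi hGi.integrableOn hGi.integrableOn, hneg,
    ← integral_add hGn.integrableOn hGi.integrableOn, ← integral_const_mul, ← integral_complex_ofReal]
  refine integral_congr_ae (ae_of_all _ fun y => ?_)
  simp only [hG, hf, smul_eq_mul]
  push_cast
  rw [Complex.exp_mul_I, Complex.exp_mul_I]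
  simp only [mul_neg, Complex.cos_neg, Complex.sin_neg]
  ring

/-! ### The kernel `K_b` -/

/-- The kernel `K_b(x) = c / (cosh (c x) + cosh (c b))`. For `c = √π` and `b ≠ 0` it is the cosine
transform `2 ∫₀^∞ cos (x y) g y b dy` of `y ↦ g y b`. -/
noncomputable def kern (c b x : ℝ) : ℝ := c / (Real.cosh (c * x) + Real.cosh (c * b))

lemma kern_den_pos (c b x : ℝ) : 0 < Real.cosh (c * x) + Real.cosh (c * b) :=
  add_pos (Real.cosh_pos _) (Real.cosh_pos _)

lemma kern_neg (c b x : ℝ) : kern c b (-x) = kern c b x := by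
  simp [kern]

lemma continuous_kern (c b : ℝ) : Continuous (kern c b) := by
  unfold kern
  exact continuous_const.div (by fun_prop) fun x => (kern_den_pos c b x).ne'

lemma continuous_kern_left (c x : ℝ) : Continuous fun b => kern c b x := by
  unfold kern
  exact continuous_const.div (by fun_prop) fun b => (kern_den_pos c b x).ne'

lemma norm_kern_le {c : ℝ} (hc : 0 < c) (b x : ℝ) : ‖kern c b x‖ ≤ 2 * c * Real.exp (-c * x) := by
  have h := kern_den_pos c b x
  rw [kern, norm_div, Real.norm_eq_abs, Real.norm_eq_abs, abs_of_pos hc, abs_of_pos h,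
    div_le_iff₀ h]
  have h1 : Real.exp (c * x) / 2 ≤ Real.cosh (c * x) + Real.cosh (c * b) := by
    rw [Real.cosh_eq]
    have := Real.exp_pos (-(c * x))
    have := Real.cosh_pos (c * b)
    linarith
  have h2 : Real.exp (-c * x) * Real.exp (c * x) = 1 := by
    rw [← Real.exp_add]; simp
  calc c = 2 * c * Real.exp (-c * x) * (Real.exp (c * x) / 2) := by
        linear_combination (-c) * h2
    _ ≤ _ := by gcongr

lemma integrable_kern {c : ℝ} (hc : 0 < c) (b : ℝ) : Integrable (kern c b) :=
  integrable_of_even (kern_neg c b) <|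
    Integrable.mono' ((exp_neg_integrableOn_Ioi 0 hc).const_mul (2 * c))
      (continuous_kern c b).aestronglyMeasurable (ae_of_all _ (norm_kern_le hc b))

lemma continuous_integral_cos_kern {c : ℝ} (hc : 0 < c) (a : ℝ) :
    Continuous fun b => ∫ x in Set.Ioi (0:ℝ), Real.cos (a * x) * kern c b x := by
  refine continuous_of_dominated (bound := fun x => 2 * c * Real.exp (-c * x)) (fun b => ?_)
    (fun b => ae_of_all _ fun x => ?_) ((exp_neg_integrableOn_Ioi 0 hc).const_mul (2 * c))
    (ae_of_all _ fun x => continuous_const.mul (continuous_kern_left c x))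
  · have := continuous_kern c b
    exact Continuous.aestronglyMeasurable (by fun_prop)
  · rw [norm_mul]
    exact (mul_le_of_le_one_left (norm_nonneg _) (Real.abs_cos_le_one _)).trans (norm_kern_le hc b x)

/-! ### Reduction to the kernel and Fourier inversion -/

/-- Evaluating the inner integral cancels `sinh (c x)` and leaves a cosine transform of `K_b`. -/
lemma lhs_eq {c : ℝ} (hc : 0 < c) (hcc : c * c = π) (a b : ℝ) :
    ∫ x in Set.Ioi (0:ℝ), ∫ y in Set.Ioi (0:ℝ),
        (Real.sin (x * y) / (Real.sinh (c * x) * Real.sinh (c * y))) *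
          Real.cos (a * x) * Real.cos (b * y) =
      1 / 2 * ∫ x in Set.Ioi (0:ℝ), Real.cos (a * x) * kern c b x := by
  rw [← integral_const_mul]
  refine setIntegral_congr_fun measurableSet_Ioi fun x hx => ?_
  have hs : Real.sinh (c * x) ≠ 0 := (Real.sinh_pos_iff.2 (mul_pos hc hx)).ne'
  have e : ∀ y, (Real.sin (x * y) / (Real.sinh (c * x) * Real.sinh (c * y))) *
          Real.cos (a * x) * Real.cos (b * y) = Real.cos (a * x) / Real.sinh (c * x) *
          (Real.sin (x * y) * Real.cos (b * y) / Real.sinh (c * y)) := fun y => by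
    rw [div_mul_eq_div_div]; ring
  simp only [e]
  rw [integral_const_mul, integral_sin_mul_cos_div_sinh hc hcc, kern]
  have hd := (kern_den_pos c b x).ne'
  generalize Real.sinh (c * x) = S at hs
  field_simp

/-- Fourier inversion for `y ↦ g y b`: `G` is this function for a fixed `b ≠ 0`. Its continuity
fixes the value at `0`, where the quotient formula does not apply. -/
lemma inversion {c : ℝ} (hc : 0 < c) (hcc : c * c = π) {b : ℝ} (hb : b ≠ 0) {G : ℝ → ℝ}
    (hG : Continuous G) (hG' : ∀ y, y ≠ 0 →
      G y = Real.sin (y * b) / (Real.sinh (c * y) * Real.sinh (c * b))) (a : ℝ) :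
    1 / π * ∫ x in Set.Ioi (0:ℝ), Real.cos (a * x) * kern c b x = G a := by
  have hsb : Real.sinh (c * b) ≠ 0 := by
    rw [Ne, Real.sinh_eq_zero]; exact mul_ne_zero hc.ne' hb
  have heven : ∀ y, G (-y) = G y := by
    intro y
    rcases eq_or_ne y 0 with rfl | hy
    · simp
    · rw [hG' y hy, hG' (-y) (neg_ne_zero.2 hy)]; simp
  have hGint : Integrable G := by
    refine integrable_of_even heven ?_
    refine IntegrableOn.congr_fun
      ((integrableOn_sin_div_sinh_scaled hc b).const_mul (1 / Real.sinh (c * b)))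
      (fun y hy => ?_) measurableSet_Ioi
    simp only [hG' y (ne_of_gt hy), mul_comm b y]
    rw [div_mul_eq_div_div]; ring
  have hcos : ∀ s, 2 * ∫ y in Set.Ioi (0:ℝ), Real.cos (s * y) * G y = kern c b s := by
    intro s
    have : ∫ y in Set.Ioi (0:ℝ), Real.cos (s * y) * G y = ∫ y in Set.Ioi (0:ℝ),
        1 / Real.sinh (c * b) * (Real.sin (b * y) * Real.cos (s * y) / Real.sinh (c * y)) := by
      refine setIntegral_congr_fun measurableSet_Ioi fun y hy => ?_
      simp only [hG' y (ne_of_gt hy), mul_comm b y]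
      rw [div_mul_eq_div_div]; ring
    rw [this, integral_const_mul, integral_sin_mul_cos_div_sinh hc hcc, kern,
      add_comm (Real.cosh (c * b))]
    have := (kern_den_pos c b s).ne'
    field_simp
  have hF : FourierTransform.fourier (fun y => (G y : ℂ)) =
      fun w : ℝ => ((kern c b (2 * π * w) : ℝ) : ℂ) := by
    funext w
    rw [Real.fourier_real_eq_integral_exp_smul]
    have e : ∀ v : ℝ, -2 * π * v * w = (-(2 * π * w)) * v := fun v => by ring
    simp only [e]
    rw [integral_exp_smul_even heven hGint, hcos, kern_neg]
  have hK : Integrable fun w : ℝ => kern c b (2 * π * w) :=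
    (integrable_kern hc b).comp_mul_left' (by positivity)
  have hinv := congrFun (Continuous.fourierInv_fourier_eq (f := fun y => (G y : ℂ))
    (by fun_prop) hGint.ofReal (by rw [hF]; exact hK.ofReal)) a
  rw [hF, Real.fourierInv_eq'] at hinv
  have e : ∀ v : ℝ, 2 * π * inner ℝ v a = (2 * π * a) * v := fun v => by
    simp; ring
  simp only [e] at hinv
  rw [integral_exp_smul_even (f := fun w => kern c b (2 * π * w))
    (fun x => by rw [mul_neg, kern_neg]) hK] at hinv
  have hinv' := Complex.ofReal_injective hinv
  rw [← hinv']
  have hsub := integral_comp_mul_left_Ioi (fun x => Real.cos (a * x) * kern c b x) 0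
    (b := 2 * π) (by positivity)
  have e2 : ∀ v : ℝ, a * (2 * π * v) = 2 * π * a * v := fun v => by ring
  simp only [e2, mul_zero, smul_eq_mul] at hsub
  rw [hsub]
  have := pi_ne_zero
  field_simp

/-- The function `(x, y) ↦ sin (x y) / (sinh (√π x) sinh (√π y))` is its own
two-dimensional cosine Fourier transform.  The right-hand side is interpreted via
its (unique) continuous extension `g` across `a = 0` and `b = 0`. -/
theorem stmt_10 (g : ℝ → ℝ → ℝ) (hg : Continuous fun p : ℝ × ℝ => g p.1 p.2)
    (hg' : ∀ a b : ℝ, a ≠ 0 → b ≠ 0 →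
      g a b = Real.sin (a * b) / (Real.sinh (Real.sqrt π * a) * Real.sinh (Real.sqrt π * b)))
    (a b : ℝ) :
    2 / π *
      ∫ x in Set.Ioi (0:ℝ), ∫ y in Set.Ioi (0:ℝ),
        (Real.sin (x * y) / (Real.sinh (Real.sqrt π * x) * Real.sinh (Real.sqrt π * y))) *
          Real.cos (a * x) * Real.cos (b * y)
      = g a b := by
  have hc : 0 < Real.sqrt π := Real.sqrt_pos.2 pi_pos
  have hcc : Real.sqrt π * Real.sqrt π = π := Real.mul_self_sqrt pi_pos.le
  rw [lhs_eq hc hcc]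
  -- Both sides are continuous in `b` and agree on the dense set `b ≠ 0`.
  have key : (fun b => 1 / π * ∫ x in Set.Ioi (0:ℝ), Real.cos (a * x) * kern (Real.sqrt π) b x) =
      fun b => g a b := by
    refine Continuous.ext_on (dense_compl_singleton (0:ℝ))
      (continuous_const.mul (continuous_integral_cos_kern hc a))
      (hg.comp (by fun_prop : Continuous fun b : ℝ => (a, b))) fun b hb => ?_
    exact inversion hc hcc hb (hg.comp (by fun_prop : Continuous fun y : ℝ => (y, b)))
      (fun y hy => hg' y b hy hb) a
  rw [← congrFun key b]
  ring
end

section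
/- For all real numbers α > 0 and β > 0 with α β = 2, the identity √2 · (Σ_{m∈ℤ} 1/cosh(π α m)) · (Σ_{n∈ℤ} 1/cosh(π β n)) = (Σ_{m∈ℤ} cosh(π α m/2)/cosh(π α m)) · (Σ_{n∈ℤ} cosh(π β n/2)/cosh(π β n)) holds. -/
open Real MeasureTheory

/-!
Write `S(c) = ∑ₘ 1 / cosh (c m)` and `R(c) = ∑ₘ cosh (c m / 2) / cosh (c m)`, sums over `ℤ`.
The identity follows from two facts.

* `S(π t) = (1 / t) S(π / t)` (`tsum_one_div_cosh_inv`). This is Poisson summation, since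
  `1 / cosh (π v)` is its own Fourier transform; that in turn is Euler's reflection formula for
  `Β(1/2 + i y, 1/2 - i y)` after the logistic substitution in the beta integral.
* `R(c)² = S(c) S(c / 2)` (`tsum_cosh_half_div_cosh_sq`), a form of Landen's transformation.
  With `A(K) = ∑ₘ 1 / (cosh (c m) cosh (c (K / 2 - m)))`, sorting the double sums by the total
  argument gives `S(c) S(c / 2) = ∑_K A(K)` and `R(c)² = ∑_N cosh (c N / 2) A(2 N)`. The addition
  theorem for `tanh` turns `sinh (c K / 2) A(K)` into a telescoping sum with value `K`, and hence
  `cosh (c N / 2) A(2 N) = A(N)`: the two series agree term by term.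

When `α β = 2`, the first fact gives `S(π α / 2) = β S(π β)` and `S(π β / 2) = α S(π α)`, so
`(R(π α) R(π β))² = α β (S(π α) S(π β))²`, and both sides of the claim are nonnegative.
-/

/-! ### The Fourier transform of `1 / cosh` and Poisson summation -/

/-- Euler's reflection formula `Β(s, 1 - s) = π / sin (π s)` at `s = 1/2 + i y`. -/
lemma betaIntegral_half_add (y : ℝ) :
    Complex.betaIntegral (1 / 2 + y * Complex.I) (1 - (1 / 2 + y * Complex.I)) =
      π / Complex.cosh (π * y) := by
  have h := Complex.betaIntegral_eq_Gamma_mul_div (1 / 2 + y * Complex.I)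
    (1 - (1 / 2 + y * Complex.I)) (by simp) (by norm_num)
  rw [h, Complex.Gamma_mul_Gamma_one_sub, add_sub_cancel, Complex.Gamma_one, div_one]
  congr 1
  rw [show (π : ℂ) * (1 / 2 + y * Complex.I) = (π * y) * Complex.I + π / 2 by ring,
    Complex.sin_add_pi_div_two, Complex.cos_mul_I]

lemma sigmoid_two_mul (v : ℝ) : Real.sigmoid (2 * v) = exp (v - log (2 * cosh v)) := by
  have h : 0 < cosh v := cosh_pos v
  rw [Real.exp_sub, Real.exp_log (by positivity), Real.sigmoid_def, Real.cosh_eq,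
    show -(2 * v) = -v + -v by ring, Real.exp_add, Real.exp_neg]
  have := Real.exp_pos v
  field_simp

lemma one_sub_sigmoid_two_mul (v : ℝ) :
    1 - Real.sigmoid (2 * v) = exp (-v - log (2 * cosh v)) := by
  rw [← Real.sigmoid_neg, show -(2 * v) = 2 * -v by ring, sigmoid_two_mul, cosh_neg]

/-- The beta integral turns into a Fourier integral of `1 / cosh` under the substitution
`x = sigmoid (2 π t v)`. -/
lemma betaIntegral_eq_integral_cosh {t : ℝ} (ht : 0 < t) (y : ℝ) :
    Complex.betaIntegral (1 / 2 + y * Complex.I) (1 - (1 / 2 + y * Complex.I)) =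
      π * t * ∫ v : ℝ, Complex.exp ((2 * π * t * y * v : ℝ) * Complex.I) *
        ((1 / cosh (π * t * v) : ℝ) : ℂ) := by
  rw [Complex.betaIntegral, intervalIntegral.integral_of_le zero_le_one,
    integral_Ioc_eq_integral_Ioo]
  have himg : (fun v : ℝ => Real.sigmoid (2 * (π * t * v))) '' Set.univ = Set.Ioo 0 1 := by
    rw [Set.image_univ, ← Real.range_sigmoid]
    refine Function.Surjective.range_comp (f := fun v : ℝ => 2 * (π * t * v)) ?_ Real.sigmoid
    intro w
    exact ⟨w / (2 * π * t), by field_simp⟩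
  have hinj : Set.InjOn (fun v : ℝ => Real.sigmoid (2 * (π * t * v))) Set.univ := by
    intro a _ b _ hab
    have := Real.sigmoid_injective hab
    have hpt : 2 * (π * t) ≠ 0 := by positivity
    apply mul_left_cancel₀ hpt
    linarith
  have hder : ∀ v ∈ Set.univ, HasDerivWithinAt (fun v : ℝ => Real.sigmoid (2 * (π * t * v)))
      (Real.sigmoid (2 * (π * t * v)) * (1 - Real.sigmoid (2 * (π * t * v))) * (2 * (π * t)))
      Set.univ v := by
    intro v _
    have h1 : HasDerivAt (fun v : ℝ => 2 * (π * t * v)) (2 * (π * t)) v := by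
      simpa using ((hasDerivAt_id v).const_mul (π * t)).const_mul 2
    exact ((Real.hasDerivAt_sigmoid _).comp v h1).hasDerivWithinAt
  rw [← himg, integral_image_eq_integral_abs_deriv_smul MeasurableSet.univ hder hinj,
    setIntegral_univ, ← integral_const_mul]
  congr 1
  ext v
  set w := π * t * v with hw
  have hc : 0 < 2 * cosh w := by have := cosh_pos w; positivity
  rw [abs_of_pos (by have := Real.sigmoid_pos (2 * w); have := Real.sigmoid_lt_one (2 * w)
                     have : 0 < 1 - Real.sigmoid (2 * w) := by linarith
                     positivity)]
  rw [show (1 : ℂ) - (Real.sigmoid (2 * w) : ℂ) = ((1 - Real.sigmoid (2 * w) : ℝ) : ℂ) by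
    push_cast; rfl, one_sub_sigmoid_two_mul, sigmoid_two_mul, ← Real.exp_add]
  have hcpow : ∀ (x : ℝ) (z : ℂ), ((exp x : ℝ) : ℂ) ^ z = Complex.exp (x * z) := by
    intro x z
    rw [Complex.cpow_def_of_ne_zero (by exact_mod_cast (exp_pos x).ne'), ← Complex.ofReal_log
      (exp_pos x).le, Real.log_exp]
  -- sigmoid and its complement at `2 w` are `exp (± w - l)`, so the integrand is a pure exponential
  set l := log (2 * cosh w) with hl
  have hexp : (1 / cosh w : ℝ) = 2 * exp (-l) := by
    rw [Real.exp_neg, hl, Real.exp_log hc]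
    field_simp
  rw [hcpow, hcpow, hexp, Complex.real_smul]
  push_cast
  rw [← Complex.exp_add]
  have h1 : Complex.exp (w - l + (-w - l)) * (2 * (π * t)) * Complex.exp
      ((w - l) * (1 / 2 + y * Complex.I - 1) + (-w - l) * (1 - (1 / 2 + y * Complex.I) - 1)) =
      (2 * (π * t)) * (Complex.exp (w - l + (-w - l)) * Complex.exp
      ((w - l) * (1 / 2 + y * Complex.I - 1) + (-w - l) * (1 - (1 / 2 + y * Complex.I) - 1))) := by
    ring
  have h2 : (π : ℂ) * t * (Complex.exp (2 * π * t * y * v * Complex.I) * (2 * Complex.exp (-l))) =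
      (2 * (π * t)) * (Complex.exp (2 * π * t * y * v * Complex.I) * Complex.exp (-l)) := by
    ring
  rw [h1, h2, ← Complex.exp_add, ← Complex.exp_add, hw]
  push_cast
  congr 2
  ring

open FourierTransform in
/-- The function `1 / cosh (π v)` is its own Fourier transform, here in rescaled form. -/
lemma fourier_one_div_cosh {t : ℝ} (ht : 0 < t) (x : ℝ) :
    𝓕 (fun v : ℝ => ((1 / cosh (π * t * v) : ℝ) : ℂ)) x =
      ((1 / t * (1 / cosh (π * (1 / t) * x)) : ℝ) : ℂ) := by
  have h := betaIntegral_eq_integral_cosh ht (-x / t)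
  rw [betaIntegral_half_add] at h
  rw [Real.fourier_real_eq_integral_exp_smul]
  simp only [smul_eq_mul]
  have e : ∀ v : ℝ, -2 * π * v * x = 2 * π * t * (-x / t) * v := by
    intro v; field_simp
  simp only [e]
  have hpt : (π : ℂ) * t ≠ 0 := by exact_mod_cast (by positivity : π * t ≠ 0)
  apply mul_left_cancel₀ hpt
  rw [← h]
  have e2 : (π : ℂ) * ((-x / t : ℝ) : ℂ) = -((π * (1 / t) * x : ℝ) : ℂ) := by
    push_cast; ring
  have htc : (t : ℂ) ≠ 0 := by exact_mod_cast ht.ne'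
  rw [e2, Complex.cosh_neg, ← Complex.ofReal_cosh]
  push_cast
  field_simp

lemma sq_le_four_mul_cosh (x : ℝ) : x ^ 2 ≤ 4 * cosh x := by
  have h1 := Real.quadratic_le_exp_of_nonneg (abs_nonneg x)
  have h2 := Real.add_one_le_exp (-|x|)
  rw [← Real.cosh_abs, Real.cosh_eq]
  rw [sq_abs] at h1
  linarith

lemma isBigO_one_div_cosh {a : ℝ} (ha : 0 < a) :
    (fun x : ℝ => 1 / cosh (a * x)) =O[Filter.cocompact ℝ] fun x : ℝ => |x| ^ (-2 : ℝ) := by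
  refine Asymptotics.IsBigO.of_bound (4 / a ^ 2) ?_
  have : ∀ᶠ x : ℝ in Filter.cocompact ℝ, x ≠ 0 :=
    Filter.cocompact_le_cofinite (Set.finite_singleton (0 : ℝ)).compl_mem_cofinite
  filter_upwards [this] with x hx
  have hc := cosh_pos (a * x)
  have h := sq_le_four_mul_cosh (a * x)
  rw [Real.norm_of_nonneg (by positivity), Real.norm_of_nonneg (by positivity),
    Real.rpow_neg (abs_nonneg x), show (2 : ℝ) = ((2 : ℕ) : ℝ) by norm_num, Real.rpow_natCast,
    sq_abs, ← div_eq_mul_inv, div_div, ← mul_pow, div_le_div_iff₀ hc (by positivity)]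
  linarith

lemma summable_one_div_cosh {a : ℝ} (ha : 0 < a) :
    Summable fun m : ℤ => 1 / cosh (a * m) :=
  summable_of_isBigO (Real.summable_abs_int_rpow one_lt_two)
    ((isBigO_one_div_cosh ha).comp_tendsto Int.tendsto_coe_cofinite)

/-- The functional equation obtained from Poisson summation. -/
lemma tsum_one_div_cosh_inv {t : ℝ} (ht : 0 < t) :
    ∑' m : ℤ, 1 / cosh (π * t * m) = 1 / t * ∑' m : ℤ, 1 / cosh (π * (1 / t) * m) := by
  have hF := funext (fourier_one_div_cosh ht)
  have hc : Continuous fun v : ℝ => ((1 / cosh (π * t * v) : ℝ) : ℂ) := by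
    refine Complex.continuous_ofReal.comp (continuous_const.div (by fun_prop) ?_)
    intro v
    exact (cosh_pos _).ne'
  have h := Real.tsum_eq_tsum_fourier_of_rpow_decay hc one_lt_two
    (Complex.isBigO_ofReal_left.2 (isBigO_one_div_cosh (by positivity)))
    (by
      rw [hF]
      exact Complex.isBigO_ofReal_left.2
        ((isBigO_one_div_cosh (by positivity)).const_mul_left (1 / t))) 0
  rw [hF] at h
  simp only [zero_add, QuotientAddGroup.mk_zero, fourier_eval_zero, mul_one] at h
  rw [← tsum_mul_left]
  exact_mod_cast h

/-! ### Landen's transformation -/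

lemma tanh_eq_sigmoid (x : ℝ) : tanh x = 2 * Real.sigmoid (2 * x) - 1 := by
  rw [Real.tanh_eq, Real.sigmoid_def, show -(2 * x) = -x + -x by ring, Real.exp_add, Real.exp_neg]
  have := Real.exp_pos x
  field_simp
  ring

lemma tendsto_tanh_affine {c : ℝ} (hc : 0 < c) (a : ℝ) :
    Filter.Tendsto (fun n : ℕ => tanh (c * n + a)) Filter.atTop (nhds 1) := by
  have h1 : Filter.Tendsto (fun n : ℕ => 2 * (c * n + a)) Filter.atTop Filter.atTop :=
    (Filter.tendsto_atTop_add_const_right _ a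
      (tendsto_natCast_atTop_atTop.const_mul_atTop hc)).const_mul_atTop two_pos
  have h2 := ((Real.tendsto_sigmoid_atTop.comp h1).const_mul 2).sub_const 1
  simp only [tanh_eq_sigmoid]
  rw [show (2 : ℝ) * 1 - 1 = 1 by norm_num] at h2
  exact h2

lemma tanh_mono : Monotone tanh := by
  intro x y h
  rw [tanh_eq_sigmoid, tanh_eq_sigmoid]
  have := Real.sigmoid_monotone (by linarith : 2 * x ≤ 2 * y)
  linarith

/-- A telescoping sum, by the limits `tanh (±∞) = ±1`. -/
lemma hasSum_tanh_sub {c : ℝ} (hc : 0 < c) (a : ℝ) :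
    HasSum (fun m : ℤ => tanh (c * (m + 1) + a) - tanh (c * m + a)) 2 := by
  have h1 : HasSum (fun n : ℕ => tanh (c * (((n : ℤ) : ℝ) + 1) + a) - tanh (c * ((n : ℤ) : ℝ) + a))
      (1 - tanh a) := by
    rw [hasSum_iff_tendsto_nat_of_nonneg (fun n => sub_nonneg.2 (tanh_mono (by linarith)))]
    have h := fun N : ℕ => Finset.sum_range_sub (fun n : ℕ => tanh (c * n + a)) N
    push_cast at h ⊢
    simp only [h]
    simpa using (tendsto_tanh_affine hc a).sub_const (tanh (c * 0 + a))
  have h2 : HasSum (fun n : ℕ => tanh (c * (((-((n : ℤ) + 1) : ℤ) : ℝ) + 1) + a) -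
      tanh (c * ((-((n : ℤ) + 1) : ℤ) : ℝ) + a)) (1 + tanh a) := by
    rw [hasSum_iff_tendsto_nat_of_nonneg (fun n => sub_nonneg.2 (tanh_mono (by linarith)))]
    have h := fun N : ℕ => Finset.sum_range_sub (fun n : ℕ => tanh (c * n + -a)) N
    have e : ∀ n : ℕ, tanh (c * (((-((n : ℤ) + 1) : ℤ) : ℝ) + 1) + a) -
      tanh (c * ((-((n : ℤ) + 1) : ℤ) : ℝ) + a) =
      tanh (c * ((n + 1 : ℕ) : ℝ) + -a) - tanh (c * n + -a) := by
      intro n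
      push_cast
      rw [show c * (-((n : ℝ) + 1) + 1) + a = -(c * n + -a) by ring,
        show c * (-((n : ℝ) + 1)) + a = -(c * (n + 1) + -a) by ring, tanh_neg, tanh_neg]
      ring
    simp only [e, h]
    simpa using (tendsto_tanh_affine hc (-a)).sub_const (tanh (c * 0 + -a))
  have h3 := HasSum.of_nat_of_neg_add_one
    (f := fun m : ℤ => tanh (c * (m + 1) + a) - tanh (c * m + a)) h1 h2
  rwa [show 1 - tanh a + (1 + tanh a) = 2 by ring] at h3

/-- `∑ₘ 1 / (cosh (c m) cosh (c (K / 2 - m)))`, which for `K ≠ 0` equals `K / sinh (c K / 2)`. -/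
noncomputable def coshConv (c : ℝ) (K : ℤ) : ℝ :=
  ∑' m : ℤ, 1 / cosh (c * m) * (1 / cosh (c * (K / 2 - m)))

lemma summable_coshConv {c : ℝ} (hc : 0 < c) (K : ℤ) :
    Summable fun m : ℤ => 1 / cosh (c * m) * (1 / cosh (c * (K / 2 - m))) := by
  refine Summable.of_nonneg_of_le (fun m => ?_) (fun m => ?_) (summable_one_div_cosh hc)
  · have := cosh_pos (c * m)
    have := cosh_pos (c * (K / 2 - m))
    positivity
  · have := cosh_pos (c * m)
    refine mul_le_of_le_one_right (by positivity) ?_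
    rw [div_le_one (cosh_pos _)]
    exact one_le_cosh _

lemma tanh_add_tanh_s12 (x y : ℝ) : tanh x + tanh y = sinh (x + y) * (1 / cosh x * (1 / cosh y)) := by
  rw [tanh_eq_sinh_div_cosh, tanh_eq_sinh_div_cosh, sinh_add]
  have := cosh_pos x
  have := cosh_pos y
  field_simp

/-- The addition theorem for `tanh` makes the convolution `coshConv` telescope. -/
lemma hasSum_tanh_add_tanh {c : ℝ} (hc : 0 < c) (K : ℤ) :
    HasSum (fun m : ℤ => tanh (c * m) + tanh (c * (K / 2 - m))) (sinh (c * K / 2) * coshConv c K) := by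
  have h := (summable_coshConv hc K).hasSum.mul_left (sinh (c * K / 2))
  convert! h using 2 with m
  rw [tanh_add_tanh_s12]
  ring_nf

/-- Shifting `K` by two adds a full telescoping sum, and `K ↦ -K` is a sign change; together these
determine the value at all integers, including odd ones. -/
lemma sinh_mul_coshConv {c : ℝ} (hc : 0 < c) (K : ℤ) : sinh (c * K / 2) * coshConv c K = K := by
  set b : ℤ → ℝ := fun K => sinh (c * K / 2) * coshConv c K with hb
  have hs : ∀ K : ℤ, HasSum (fun m : ℤ => tanh (c * m) + tanh (c * (K / 2 - m))) (b K) :=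
    hasSum_tanh_add_tanh hc
  have hneg : ∀ K, b (-K) = -b K := by
    intro K
    have h := ((Equiv.neg ℤ).hasSum_iff.2 (hs K)).neg
    refine (hs (-K)).unique ?_
    convert! h using 2 with m
    simp only [Function.comp_apply, Equiv.neg_apply]
    push_cast
    rw [show c * (-(K : ℝ) / 2 - m) = -(c * (K / 2 - -(m : ℝ))) by ring,
      show c * -(m : ℝ) = -(c * m) by ring, tanh_neg, tanh_neg]
    ring
  have hstep : ∀ K, b (K + 2) = b K + 2 := by
    intro K
    have h := (Equiv.neg ℤ).hasSum_iff.2 (hasSum_tanh_sub hc (c * K / 2))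
    refine (hs (K + 2)).unique ?_
    convert! (hs K).add h using 2 with m
    simp only [Function.comp_apply, Equiv.neg_apply]
    push_cast
    rw [show c * (((K : ℝ) + 2) / 2 - m) = c * (-(m : ℝ) + 1) + c * K / 2 by ring,
      show c * ((K : ℝ) / 2 - m) = c * -(m : ℝ) + c * K / 2 by ring]
    ring
  have h0 : b 0 = 0 := by simp [hb]
  -- `b 1 = b (-1) + 2 = -b 1 + 2`
  have h1 : b 1 = 1 := by
    have h2 := hstep (-1)
    rw [hneg 1] at h2
    norm_num at h2
    linarith
  have hper : Function.Periodic (fun K : ℤ => b K - K) 2 := by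
    intro K
    simp only [hstep]
    push_cast
    ring
  rw [← sub_eq_zero]
  change (fun K : ℤ => b K - K) K = 0
  have hq := fun n r : ℤ => hper.int_mul n r
  obtain ⟨n, rfl | rfl⟩ := Int.even_or_odd' K
  · have := hq n 0
    rw [zero_add] at this
    rw [mul_comm, ← Int.cast_id (n := n), this]
    simp [h0]
  · have := hq n 1
    rw [add_comm, mul_comm, ← Int.cast_id (n := n), this]
    simp [h1]

/-- From the value `K / sinh (c K / 2)` and `sinh (2 x) = 2 sinh x cosh x`; trivial at `N = 0`. -/
lemma cosh_mul_coshConv {c : ℝ} (hc : 0 < c) (N : ℤ) :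
    cosh (c * N / 2) * coshConv c (2 * N) = coshConv c N := by
  rcases eq_or_ne N 0 with rfl | hN
  · simp
  have h1 := sinh_mul_coshConv hc N
  have h2 := sinh_mul_coshConv hc (2 * N)
  push_cast at h2
  rw [show c * (2 * (N : ℝ)) / 2 = 2 * (c * N / 2) by ring, sinh_two_mul] at h2
  have hne : sinh (c * N / 2) ≠ 0 := by
    rw [Ne, sinh_eq_zero]
    have : (N : ℝ) ≠ 0 := by exact_mod_cast hN
    positivity
  apply mul_left_cancel₀ hne
  linarith

/-- The product of two series over `ℤ`, with the terms `f m * g k` grouped by `K = k + j m`. -/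
lemma hasSum_mul_conv {f g : ℤ → ℝ} (hf : Summable f) (hg : Summable g) (j : ℤ) :
    HasSum (fun K : ℤ => ∑' m : ℤ, f m * g (K - j * m)) ((∑' m, f m) * ∑' m, g m) := by
  have hs : Summable fun p : ℤ × ℤ => f p.1 * g p.2 :=
    summable_mul_of_summable_norm hf.norm hg.norm
  let e : ℤ × ℤ ≃ ℤ × ℤ :=
    { toFun := fun p => (p.2, p.1 - j * p.2)
      invFun := fun p => (p.2 + j * p.1, p.1)
      left_inv := fun p => by ext <;> simp
      right_inv := fun p => by ext <;> simp }
  have h := e.hasSum_iff.2 (hf.hasSum.mul hg.hasSum hs)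
  exact h.prod_fiberwise fun K => (h.summable.prod_factor K).hasSum

lemma cosh_half_sq_le (x : ℝ) : cosh (x / 2) ^ 2 ≤ cosh x := by
  have h := cosh_two_mul (x / 2)
  rw [show 2 * (x / 2) = x by ring] at h
  have := sq_nonneg (sinh (x / 2))
  linarith

lemma exp_le_two_mul_cosh (x : ℝ) : exp x ≤ 2 * cosh x := by
  rw [cosh_eq]
  have := exp_pos (-x)
  linarith

lemma summable_exp_div_cosh {c : ℝ} (hc : 0 < c) :
    Summable fun m : ℤ => exp (c * m / 2) / cosh (c * m) := by
  refine Summable.of_nonneg_of_le (fun m => ?_) (fun m => ?_)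
    ((summable_one_div_cosh (half_pos hc)).mul_left 2)
  · have := cosh_pos (c * m)
    positivity
  · have h1 := exp_le_two_mul_cosh (c * m / 2)
    have h2 := cosh_half_sq_le (c * m)
    have h3 := cosh_pos (c * m / 2)
    rw [show c / 2 * (m : ℝ) = c * m / 2 by ring, mul_one_div, div_le_div_iff₀ (cosh_pos _) h3]
    nlinarith

/-- A form of Landen's transformation. By parity `cosh (c m / 2)` may be replaced by either
`exp (± c m / 2)` in the sum; the exponentials factor out of the convolution, and averaging the two
signs restores the `cosh`. -/
lemma tsum_cosh_half_div_cosh_sq {c : ℝ} (hc : 0 < c) :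
    (∑' m : ℤ, cosh (c * m / 2) / cosh (c * m)) ^ 2 =
      (∑' m : ℤ, 1 / cosh (c * m)) * ∑' m : ℤ, 1 / cosh (c / 2 * m) := by
  have hp := summable_exp_div_cosh hc
  set E := ∑' m : ℤ, exp (c * m / 2) / cosh (c * m) with hE
  have hn : HasSum (fun m : ℤ => exp (-(c * m / 2)) / cosh (c * m)) E := by
    have h := (Equiv.neg ℤ).hasSum_iff.2 hp.hasSum
    convert! h using 2 with m
    simp only [Function.comp_apply, Equiv.neg_apply]
    push_cast
    rw [show c * -(m : ℝ) = -(c * m) by ring, cosh_neg, neg_div]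
  have hS : ∑' m : ℤ, cosh (c * m / 2) / cosh (c * m) = E := by
    have h := (hp.hasSum.add hn).div_const 2
    rw [← hE, add_self_div_two] at h
    rw [← h.tsum_eq]
    congr 1
    ext m
    rw [cosh_eq (c * m / 2)]
    ring
  have h1 := hasSum_mul_conv hp hp 1
  have h2 := hasSum_mul_conv hn.summable hn.summable 1
  rw [hn.tsum_eq] at h2
  have h3 := (h1.add h2).div_const 2
  rw [← hE, add_self_div_two] at h3
  have h4 := hasSum_mul_conv (summable_one_div_cosh hc) (summable_one_div_cosh (half_pos hc)) 2
  rw [hS, sq]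
  refine h3.unique ?_
  convert! h4 using 2 with N
  have e1 : ∀ m : ℤ, exp (c * m / 2) / cosh (c * m) *
      (exp (c * ((N - 1 * m : ℤ) : ℝ) / 2) / cosh (c * ((N - 1 * m : ℤ) : ℝ))) =
      exp (c * N / 2) * (1 / cosh (c * m) * (1 / cosh (c * (((2 * N : ℤ) : ℝ) / 2 - m)))) := by
    intro m
    push_cast
    rw [show c * (N : ℝ) / 2 = c * m / 2 + c * (N - 1 * m) / 2 by ring, exp_add,
      show c * (2 * (N : ℝ) / 2 - m) = c * (N - 1 * m) by ring]
    ring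
  have e2 : ∀ m : ℤ, exp (-(c * m / 2)) / cosh (c * m) *
      (exp (-(c * ((N - 1 * m : ℤ) : ℝ) / 2)) / cosh (c * ((N - 1 * m : ℤ) : ℝ))) =
      exp (-(c * N / 2)) * (1 / cosh (c * m) * (1 / cosh (c * (((2 * N : ℤ) : ℝ) / 2 - m)))) := by
    intro m
    push_cast
    rw [show -(c * (N : ℝ) / 2) = -(c * m / 2) + -(c * (N - 1 * m) / 2) by ring, exp_add,
      show c * (2 * (N : ℝ) / 2 - m) = c * (N - 1 * m) by ring]
    ring
  have e3 : ∀ m : ℤ, 1 / cosh (c * m) * (1 / cosh (c / 2 * ((N - 2 * m : ℤ) : ℝ))) =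
      1 / cosh (c * m) * (1 / cosh (c * ((N : ℝ) / 2 - m))) := by
    intro m
    push_cast
    rw [show c / 2 * ((N : ℝ) - 2 * m) = c * (N / 2 - m) by ring]
  simp only [e1, e2, e3, tsum_mul_left]
  change (exp (c * N / 2) * coshConv c (2 * N) + exp (-(c * N / 2)) * coshConv c (2 * N)) / 2 =
    coshConv c N
  rw [← cosh_mul_coshConv hc N, cosh_eq]
  ring

/-! ### The product identity -/

theorem stmt_12 (α β : ℝ) (hα : 0 < α) (hβ : 0 < β) (hαβ : α * β = 2) :
    Real.sqrt 2 * ((∑' m : ℤ, 1 / Real.cosh (π * α * m)) * (∑' n : ℤ, 1 / Real.cosh (π * β * n)))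
      = (∑' m : ℤ, Real.cosh (π * α * m / 2) / Real.cosh (π * α * m)) *
        (∑' n : ℤ, Real.cosh (π * β * n / 2) / Real.cosh (π * β * n)) := by
  have hA := tsum_cosh_half_div_cosh_sq (c := π * α) (by positivity)
  have hB := tsum_cosh_half_div_cosh_sq (c := π * β) (by positivity)
  have hPA := tsum_one_div_cosh_inv (t := α / 2) (by positivity)
  have hPB := tsum_one_div_cosh_inv (t := β / 2) (by positivity)
  have ea : 1 / (α / 2) = β := by field_simp; linarith
  have eb : 1 / (β / 2) = α := by field_simp; linarith
  rw [ea, ← mul_div_assoc] at hPA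
  rw [eb, ← mul_div_assoc] at hPB
  rw [hPA] at hA
  rw [hPB] at hB
  have hnn : ∀ x y : ℤ → ℝ, 0 ≤ ∑' m : ℤ, cosh (x m) / cosh (y m) := fun x y =>
    tsum_nonneg fun m => div_nonneg (cosh_pos _).le (cosh_pos _).le
  have hnn1 : ∀ y : ℤ → ℝ, 0 ≤ ∑' m : ℤ, 1 / cosh (y m) := fun y =>
    tsum_nonneg fun m => div_nonneg zero_le_one (cosh_pos _).le
  have hleft : 0 ≤ Real.sqrt 2 *
      ((∑' m : ℤ, 1 / cosh (π * α * m)) * (∑' n : ℤ, 1 / cosh (π * β * n))) :=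
    mul_nonneg (sqrt_nonneg 2) (mul_nonneg (hnn1 _) (hnn1 _))
  have hright := mul_nonneg (hnn (fun m => π * α * m / 2) (fun m => π * α * m))
    (hnn (fun n => π * β * n / 2) (fun n => π * β * n))
  rw [← sq_eq_sq₀ hleft hright, mul_pow, mul_pow, mul_pow, Real.sq_sqrt zero_le_two, hA, hB]
  linear_combination (-((∑' m : ℤ, 1 / cosh (π * α * m)) * (∑' n : ℤ, 1 / cosh (π * β * n))) ^ 2) *
    hαβ
end

section
/- For all real numbers α > 0 and β > 0 with α β = 1, the identity (Σ_{n∈ℤ} 1/cosh(π n α)) · (Σ_{n∈ℤ} 1/cosh(π n β)) = 2/π + 4 Σ_{n=1}^∞ α n / sinh(π n α) + 4 Σ_{n=1}^∞ β n / sinh(π n β) holds. -/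
open Real MeasureTheory

/-!
Write `f t = ∑_{n ∈ ℤ} sech (πnt)`, `C t = ∑_{n ∈ ℤ} sech² (πnt)` and
`S t = ∑_{n ≥ 1} n / sinh (πnt)`. The identity rests on two facts.

* `f t ^ 2 = C t + 4 S t` (`sq_tsum_inv_cosh`). Expand the square over pairs `(n, n + k)` and sum over
  `n` first. For `k ≠ 0`, `sech x · sech (x + ka) = (tanh (x + ka) - tanh x) / sinh (ka)` telescopes,
  giving `2k / sinh (ka)` with `a = πt`; the diagonal `k = 0` gives `C t`.
* `α C α = 2/π + 4 β S β` when `αβ = 1`. Both `C` and `S` are combinations of the Lambert series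
  `L t = ∑ σ₁(n) exp (-2πnt)`, with `E₂(it) = 1 - 24 L t` (`hasSum_cosh_sq`, `hasSum_div_sinh`), and
  the relation between them is the quasi-modularity of `E₂` under `z ↦ -1/z` (`lambert_inv`).

Together they give `α (f α)² = 2/π + 4α S α + 4β S β` (`mul_sq_eq`). The right-hand side is symmetric
in `α` and `β`, so `α (f α)² = β (f β)²`, whence `f β = α f α` by nonnegativity, and
`f α · f β = α (f α)²`.
-/

open Filter Topology ArithmeticFunction.sigma

/-- The Lambert series `∑ σ₁(n) qⁿ` at the real nome `q = exp (-2πt)`. -/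
noncomputable def lambert (t : ℝ) : ℝ :=
  ∑' n : ℕ+, (σ 1 (n : ℕ) : ℝ) * (Real.exp (-(2 * π * t))) ^ (n : ℕ)

lemma E2_mul_I (t : ℝ) (ht : 0 < t) :
    EisensteinSeries.E2 ⟨Complex.I * t, by simpa using ht⟩ = ((1 - 24 * lambert t : ℝ) : ℂ) := by
  rw [EisensteinSeries.E2_eq_tsum_cexp]
  unfold lambert
  push_cast [Complex.ofReal_tsum]
  congr 5
  ext n
  congr 3
  linear_combination (2 * (π : ℂ) * t) * Complex.I_mul_I

/-- The law `E₂(-1/z) = z² E₂(z) + 6z/(πi)` on the imaginary axis `z = it`. -/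
lemma lambert_inv (t : ℝ) (ht : 0 < t) :
    1 - 24 * lambert t = -(1 / t ^ 2) * (1 - 24 * lambert (1 / t)) + 6 / (π * t) := by
  set z : UpperHalfPlane := ⟨Complex.I * t, by simpa using ht⟩ with hz
  have h := EisensteinSeries.G2_S_transform z
  have hG : ∀ w, EisensteinSeries.G2 w = (π ^ 2 / 3 : ℂ) * EisensteinSeries.E2 w := by
    intro w
    have : (π : ℂ) ≠ 0 := by exact_mod_cast pi_ne_zero
    simp [EisensteinSeries.E2, riemannZeta_two]
    field_simp
    ring
  have hS : ModularGroup.S • z = ⟨Complex.I * ((1 / t : ℝ) : ℂ), by simpa using ht⟩ := by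
    rw [UpperHalfPlane.modular_S_smul, UpperHalfPlane.ext_iff]
    simp [hz, mul_comm]
  rw [hG, hG, hS, hz, E2_mul_I t ht, E2_mul_I (1 / t) (by positivity)] at h
  have hI : Complex.I ≠ 0 := Complex.I_ne_zero
  have h1 : (t : ℂ) ≠ 0 := by exact_mod_cast ht.ne'
  have hp : (π : ℂ) ≠ 0 := by exact_mod_cast pi_ne_zero
  apply Complex.ofReal_injective
  have h2 : ((Complex.I * t) ^ 2)⁻¹ = -(1 / (t : ℂ) ^ 2) := by
    rw [mul_pow, Complex.I_sq]; field_simp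
  have h3 : -2 * π * Complex.I / (Complex.I * t) = -2 * π / (t : ℂ) := by field_simp
  simp only [] at h
  rw [h2, h3] at h
  set a := lambert t
  set b := lambert (1 / t)
  push_cast at h ⊢
  field_simp at h ⊢
  linear_combination h

lemma tsum_pnat_mul_pow {x : ℝ} (h0 : 0 ≤ x) (h1 : x < 1) :
    ∑' c : ℕ+, (c : ℝ) * x ^ (c : ℕ) = x / (1 - x) ^ 2 := by
  have hx : ‖x‖ < 1 := by rwa [norm_of_nonneg h0]
  rw [← tsum_coe_mul_geometric_of_norm_lt_one hx,
    ← tsum_zero_pnat_eq_tsum_nat (f := fun n : ℕ ↦ (n : ℝ) * x ^ n)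
      (by simpa using summable_pow_mul_geometric_of_norm_lt_one 1 hx)]
  simp

/-- Expanding `u / (1 - u)² = ∑ m uᵐ` at `u = qⁿ` and collecting powers of `q` gives `∑ σ₁(N) q^N`. -/
lemma hasSum_lambert_sq (t : ℝ) (ht : 0 < t) :
    HasSum (fun n : ℕ+ ↦ Real.exp (-(2 * π * t)) ^ (n : ℕ) /
      (1 - Real.exp (-(2 * π * t)) ^ (n : ℕ)) ^ 2) (lambert t) := by
  unfold lambert
  set q := Real.exp (-(2 * π * t)) with hq
  have hq0 : 0 < q := Real.exp_pos _
  have hq1 : q < 1 := by rw [hq, Real.exp_lt_one_iff]; have := pi_pos; simp; positivity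
  have hqn : ‖q‖ < 1 := by rwa [norm_of_nonneg hq0.le]
  have hs := summable_prod_mul_pow 1 hqn
  have hin : ∀ d : ℕ+, ∑' c : ℕ+, ((c : ℕ) : ℝ) ^ 1 * q ^ ((d : ℕ) * c) =
      q ^ (d : ℕ) / (1 - q ^ (d : ℕ)) ^ 2 := by
    intro d
    rw [← tsum_pnat_mul_pow (by positivity) (pow_lt_one₀ hq0.le hq1 d.ne_zero)]
    simp [pow_mul]
  have h := tsum_prod_pow_eq_tsum_sigma 1 hqn
  have h2 := hs.prod.hasSum
  rw [h] at h2
  simpa only [hin] using h2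

lemma hasSum_lambert (t : ℝ) (ht : 0 < t) :
    HasSum (fun n : ℕ+ ↦ (n : ℝ) * Real.exp (-(2 * π * t)) ^ (n : ℕ) /
      (1 - Real.exp (-(2 * π * t)) ^ (n : ℕ))) (lambert t) := by
  unfold lambert
  set q := Real.exp (-(2 * π * t)) with hq
  have hq0 : 0 < q := Real.exp_pos _
  have hq1 : q < 1 := by rw [hq, Real.exp_lt_one_iff]; have := pi_pos; simp; positivity
  have hqn : ‖q‖ < 1 := by rwa [norm_of_nonneg hq0.le]
  have h := tsum_pow_div_one_sub_eq_tsum_sigma hqn 1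
  have hs := (summable_norm_pow_mul_geometric_div_one_sub 1 hqn).comp_injective PNat.coe_injective
  have := hs.hasSum
  simp only [Function.comp_def] at this
  rw [h] at this
  simpa using this


/-- With `x = exp (-πnt)`, `1 / sinh (πnt) = 2x / (1 - x²) = 2 (x / (1 - x) - x² / (1 - x²))`. -/
lemma hasSum_div_sinh (t : ℝ) (ht : 0 < t) :
    HasSum (fun n : ℕ+ ↦ (n : ℝ) / Real.sinh (π * n * t)) (2 * (lambert (t / 2) - lambert t)) := by
  have h := ((hasSum_lambert (t / 2) (by positivity)).sub (hasSum_lambert t ht)).mul_left 2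
  refine h.congr_fun fun n ↦ ?_
  have hx1 : Real.exp (-(2 * π * (t / 2))) ^ (n : ℕ) = Real.exp (-(π * n * t)) := by
    rw [← Real.exp_nat_mul]; congr 1; ring
  have hx2 : Real.exp (-(2 * π * t)) ^ (n : ℕ) = Real.exp (-(π * n * t)) ^ 2 := by
    rw [← Real.exp_nat_mul, ← Real.exp_nat_mul]; congr 1; push_cast; ring
  have hn : (0 : ℝ) < n := by exact_mod_cast n.pos
  have hlt : Real.exp (-(π * n * t)) < 1 := by
    rw [Real.exp_lt_one_iff]; have := pi_pos; simp; positivity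
  rw [hx1, hx2, Real.sinh_eq]
  have h0 := Real.exp_pos (-(π * n * t))
  have hinv : Real.exp (π * n * t) = (Real.exp (-(π * n * t)))⁻¹ := by rw [Real.exp_neg, inv_inv]
  rw [hinv]
  set x := Real.exp (-(π * n * t))
  have h1 : 1 - x ≠ 0 := by linarith
  have h2 : 1 - x ^ 2 ≠ 0 := by nlinarith
  have h3 : x⁻¹ - x ≠ 0 := by
    rw [show x⁻¹ - x = (1 - x ^ 2) / x by field_simp]; positivity
  field_simp
  ring

lemma hasSum_int_of_even {f : ℤ → ℝ} (hf : f.Even) {a : ℝ} (h : HasSum (fun n : ℕ+ ↦ f n) a) :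
    HasSum f (f 0 + 2 * a) := by
  have h1 : HasSum (fun n : ℕ ↦ f n) (a + f 0) := by
    simpa using (hasSum_pnat_iff (f := fun n : ℕ ↦ f n)).1 (by simpa using h)
  have h2 : HasSum (fun n : ℕ ↦ f (-(n + 1))) a := by
    have := (hasSum_pnat_iff_hasSum_succ (f := fun n : ℕ ↦ f n)).1 (by simpa using h)
    refine this.congr_fun fun n ↦ ?_
    rw [hf]
    simp
  convert h1.of_nat_of_neg_add_one h2 using 1
  ring

/-- With `u = exp (-2πnt)`, `sech² (πnt) = 4u / (1 + u)² = 4 (u / (1 - u)² - 4u² / (1 - u²)²)`. -/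
lemma hasSum_cosh_sq (t : ℝ) (ht : 0 < t) :
    HasSum (fun n : ℤ ↦ 1 / Real.cosh (π * n * t) ^ 2)
      (1 + 8 * (lambert t - 4 * lambert (2 * t))) := by
  have h := ((hasSum_lambert_sq t ht).sub
    ((hasSum_lambert_sq (2 * t) (by positivity)).mul_left 4)).mul_left 4
  have key : HasSum (fun n : ℕ+ ↦ 1 / Real.cosh (π * n * t) ^ 2)
      (4 * (lambert t - 4 * lambert (2 * t))) := by
    refine h.congr_fun fun n ↦ ?_
    have hx1 : Real.exp (-(2 * π * t)) ^ (n : ℕ) = Real.exp (-(π * n * t)) ^ 2 := by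
      rw [← Real.exp_nat_mul, ← Real.exp_nat_mul]; congr 1; push_cast; ring
    have hx2 : Real.exp (-(2 * π * (2 * t))) ^ (n : ℕ) = Real.exp (-(π * n * t)) ^ 4 := by
      rw [← Real.exp_nat_mul, ← Real.exp_nat_mul]; congr 1; push_cast; ring
    have hn : (0 : ℝ) < n := by exact_mod_cast n.pos
    have hlt : Real.exp (-(π * n * t)) < 1 := by
      rw [Real.exp_lt_one_iff]; have := pi_pos; simp; positivity
    rw [hx1, hx2, Real.cosh_eq]
    have h0 := Real.exp_pos (-(π * n * t))
    have hinv : Real.exp (π * n * t) = (Real.exp (-(π * n * t)))⁻¹ := by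
      rw [Real.exp_neg, inv_inv]
    rw [hinv]
    set x := Real.exp (-(π * n * t))
    have h2 : 1 - x ^ 2 ≠ 0 := by nlinarith
    have h3 : 1 + x ^ 2 ≠ 0 := by positivity
    have h4 : x⁻¹ + x = (1 + x ^ 2) / x := by field_simp
    rw [h4, show 1 - x ^ 4 = (1 - x ^ 2) * (1 + x ^ 2) by ring]
    field_simp
    ring
  have := hasSum_int_of_even (f := fun n : ℤ ↦ 1 / Real.cosh (π * n * t) ^ 2)
    (fun n ↦ by simp) (by simpa using key)
  convert this using 1
  simp
  ring

lemma summable_inv_cosh (t : ℝ) (ht : 0 < t) :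
    Summable (fun n : ℤ ↦ 1 / Real.cosh (π * n * t)) := by
  have hnat : Summable (fun n : ℕ ↦ 1 / Real.cosh (π * n * t)) := by
    have hq1 : Real.exp (-(π * t)) < 1 := by
      rw [Real.exp_lt_one_iff]; have := pi_pos; simp; positivity
    refine Summable.of_nonneg_of_le (fun n ↦ (div_pos one_pos (Real.cosh_pos _)).le) (fun n ↦ ?_)
      ((summable_geometric_of_lt_one (Real.exp_pos _).le hq1).mul_left 2)
    rw [← Real.exp_nat_mul, div_le_iff₀ (Real.cosh_pos _), Real.cosh_eq,
      show (n : ℝ) * -(π * t) = -(π * n * t) by ring]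
    have h1 : Real.exp (-(π * n * t)) * Real.exp (π * n * t) = 1 := by
      rw [← Real.exp_add]; simp
    nlinarith [sq_nonneg (Real.exp (-(π * n * t)))]
  refine Summable.of_nat_of_neg (by simpa using hnat) (by simpa using hnat)

lemma tendsto_tanh_atTop : Tendsto Real.tanh atTop (𝓝 1) := by
  have h : Tendsto (fun x : ℝ ↦ Real.exp (-(2 * x))) atTop (𝓝 0) :=
    Real.tendsto_exp_neg_atTop_nhds_zero.comp (tendsto_id.const_mul_atTop two_pos)
  have h2 : Tendsto (fun x : ℝ ↦ (1 - Real.exp (-(2 * x))) / (1 + Real.exp (-(2 * x)))) atTop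
      (𝓝 ((1 - 0) / (1 + 0))) := (h.const_sub 1).div (h.const_add 1) (by simp)
  simp only [sub_zero, add_zero, div_one] at h2
  refine h2.congr fun x ↦ ?_
  rw [Real.tanh_eq, show -(2 * x) = -x + -x by ring, Real.exp_add,
    show Real.exp x = (Real.exp (-x))⁻¹ by rw [Real.exp_neg, inv_inv]]
  have := Real.exp_pos (-x)
  field_simp

lemma tanh_sub_tanh (x y : ℝ) :
    Real.tanh y - Real.tanh x = Real.sinh (y - x) * (1 / Real.cosh x * (1 / Real.cosh y)) := by
  have := (Real.cosh_pos x).ne'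
  have := (Real.cosh_pos y).ne'
  rw [Real.tanh_eq_sinh_div_cosh, Real.tanh_eq_sinh_div_cosh, Real.sinh_sub]
  field_simp

lemma hasSum_tanh_succ (a : ℝ) (ha : 0 < a) :
    HasSum (fun n : ℤ ↦ Real.tanh ((n + 1) * a) - Real.tanh (n * a)) 2 := by
  have key : HasSum (fun n : ℕ ↦ Real.tanh ((n + 1) * a) - Real.tanh (n * a)) 1 := by
    rw [hasSum_iff_tendsto_nat_of_nonneg]
    · have h := Finset.sum_range_sub (fun n : ℕ ↦ Real.tanh (n * a))
      push_cast at h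
      simp only [h]
      simpa [Function.comp_def] using tendsto_tanh_atTop.comp (tendsto_natCast_atTop_atTop.atTop_mul_const ha)
    · intro n
      rw [tanh_sub_tanh]
      have h1 : 0 ≤ Real.sinh ((n + 1) * a - n * a) := by
        rw [Real.sinh_nonneg_iff]; ring_nf; exact ha.le
      have := Real.cosh_pos ((n + 1) * a)
      have := Real.cosh_pos (n * a)
      positivity
  have := HasSum.of_nat_of_neg_add_one
    (f := fun n : ℤ ↦ Real.tanh ((n + 1) * a) - Real.tanh (n * a)) (m := 1) (m' := 1)
    (by simpa using key) (by
      refine key.congr_fun fun n ↦ ?_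
      push_cast
      rw [show (-((n : ℝ) + 1) + 1) * a = -(n * a) by ring,
        show (-((n : ℝ) + 1)) * a = -((n + 1) * a) by ring, Real.tanh_neg, Real.tanh_neg]
      ring)
  convert this using 1
  norm_num

lemma hasSum_tanh_add (a : ℝ) (ha : 0 < a) (k : ℤ) :
    HasSum (fun n : ℤ ↦ Real.tanh ((n + k : ℤ) * a) - Real.tanh (n * a)) (2 * k) := by
  have step : ∀ k : ℤ, HasSum (fun n : ℤ ↦ Real.tanh ((n + k + 1 : ℤ) * a)
      - Real.tanh ((n + k : ℤ) * a)) 2 := by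
    intro k
    have := (Equiv.addRight k).hasSum_iff.2 (hasSum_tanh_succ a ha)
    simpa [Function.comp_def] using this
  induction k using Int.induction_on with
  | zero => simp
  | succ i ih =>
    rw [show (2 * ((i + 1 : ℤ) : ℝ)) = 2 * (i : ℤ) + 2 by push_cast; ring]
    refine (ih.add (step i)).congr_fun fun n ↦ ?_
    rw [← add_assoc]
    ring
  | pred i ih =>
    rw [show (2 * ((-i - 1 : ℤ) : ℝ)) = 2 * (-i : ℤ) - 2 by push_cast; ring]
    refine (ih.sub (step (-i - 1))).congr_fun fun n ↦ ?_
    rw [show n + (-(i : ℤ) - 1) + 1 = n + -i by ring]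
    ring

/-- The off-diagonal part of the square of `∑ sech (πnt)`: pairs of indices differing by `k`. -/
lemma tsum_inv_cosh_mul_shift (t : ℝ) (ht : 0 < t) (k : ℤ) (hk : k ≠ 0) :
    ∑' n : ℤ, 1 / Real.cosh (π * n * t) * (1 / Real.cosh (π * (n + k : ℤ) * t))
      = 2 * (k / Real.sinh (π * k * t)) := by
  have hs : Real.sinh (π * k * t) ≠ 0 := by
    rw [Ne, Real.sinh_eq_zero]
    have := pi_ne_zero
    have : (k : ℝ) ≠ 0 := by exact_mod_cast hk
    positivity
  have h := ((hasSum_tanh_add (π * t) (by positivity) k).mul_left (Real.sinh (π * k * t))⁻¹).tsum_eq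
  rw [show 2 * ((k : ℝ) / Real.sinh (π * k * t)) = (Real.sinh (π * k * t))⁻¹ * (2 * k) by
    field_simp, ← h]
  refine tsum_congr fun n ↦ ?_
  rw [tanh_sub_tanh, show ((n + k : ℤ) : ℝ) * (π * t) - n * (π * t) = π * k * t by push_cast; ring,
    inv_mul_cancel_left₀ hs, show (n : ℝ) * (π * t) = π * n * t by ring,
    show ((n + k : ℤ) : ℝ) * (π * t) = π * (n + k : ℤ) * t by ring]

lemma sq_tsum_inv_cosh (t : ℝ) (ht : 0 < t) :
    (∑' n : ℤ, 1 / Real.cosh (π * n * t)) ^ 2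
      = (∑' n : ℤ, 1 / Real.cosh (π * n * t) ^ 2)
        + 4 * ∑' n : ℕ+, (n : ℝ) / Real.sinh (π * n * t) := by
  set g : ℤ → ℝ := fun n ↦ 1 / Real.cosh (π * n * t) with hg
  have hgs : Summable g := summable_inv_cosh t ht
  have hgn : Summable (fun n ↦ ‖g n‖) := hgs.norm
  have hprod := summable_mul_of_summable_norm hgn hgn
  -- Index pairs by (difference, first index).
  let e : ℤ × ℤ ≃ ℤ × ℤ :=
    { toFun := fun p ↦ (p.2, p.2 + p.1)
      invFun := fun p ↦ (p.2 - p.1, p.1)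
      left_inv := fun p ↦ by simp
      right_inv := fun p ↦ by simp }
  have hprod' := e.summable_iff.2 hprod
  rw [sq, tsum_mul_tsum_of_summable_norm hgn hgn,
    ← e.tsum_eq (fun x : ℤ × ℤ ↦ g x.1 * g x.2)]
  refine (Summable.tsum_prod (f := fun c : ℤ × ℤ ↦ g (e c).1 * g (e c).2) hprod').trans ?_
  set C := ∑' n : ℤ, 1 / Real.cosh (π * n * t) ^ 2 with hC
  set F : ℤ → ℝ := fun k ↦ if k = 0 then C else 2 * (k / Real.sinh (π * k * t)) with hF
  have hFk : ∀ k : ℤ, ∑' n : ℤ, g n * g (n + k) = F k := by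
    intro k
    by_cases hk : k = 0
    · subst hk
      simp only [hF, hg, hC, if_true, add_zero]
      exact tsum_congr fun n ↦ by ring
    · simp only [hF, if_neg hk]
      exact tsum_inv_cosh_mul_shift t ht k hk
  have hFe : F.Even := by
    intro k
    simp [hF, Real.sinh_neg, neg_div_neg_eq]
  have hS := hasSum_div_sinh t ht
  have h1 : HasSum (fun n : ℕ+ ↦ F n) (2 * ∑' n : ℕ+, (n : ℝ) / Real.sinh (π * n * t)) := by
    refine (hS.summable.hasSum.mul_left 2).congr_fun fun n ↦ ?_
    simp [hF]
  calc _ = ∑' k : ℤ, F k := tsum_congr hFk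
    _ = _ := by
      rw [(hasSum_int_of_even hFe h1).tsum_eq]
      simp only [hF, if_true]
      ring

lemma mul_sq_eq (α β : ℝ) (hα : 0 < α) (hβ : 0 < β) (hαβ : α * β = 1) :
    α * (∑' n : ℤ, 1 / Real.cosh (π * n * α)) ^ 2
      = 2 / π + 4 * (α * ∑' n : ℕ+, (n : ℝ) / Real.sinh (π * n * α))
        + 4 * (β * ∑' n : ℕ+, (n : ℝ) / Real.sinh (π * n * β)) := by
  have hb : β = 1 / α := by field_simp; linarith
  have hp := pi_pos
  rw [sq_tsum_inv_cosh α hα, (hasSum_cosh_sq α hα).tsum_eq, (hasSum_div_sinh α hα).tsum_eq,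
    (hasSum_div_sinh β hβ).tsum_eq]
  have h1 := lambert_inv α hα
  have h2 := lambert_inv (2 * α) (by positivity)
  rw [show 1 / (2 * α) = β / 2 by rw [hb]; field_simp] at h2
  rw [← hb] at h1
  rw [show β * (2 * (lambert (β / 2) - lambert β)) = 1 / α * (2 * (lambert (β / 2) - lambert β)) by
    rw [hb]]
  field_simp at h1 h2 ⊢
  linear_combination (-8/24) * h1 + (8/24) * h2

theorem stmt_13 (α β : ℝ) (hα : 0 < α) (hβ : 0 < β) (hαβ : α * β = 1) :
    (∑' n : ℤ, 1 / Real.cosh (π * n * α)) * (∑' n : ℤ, 1 / Real.cosh (π * n * β))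
      = 2 / π + 4 * (∑' n : ℕ+, α * n / Real.sinh (π * n * α))
        + 4 * (∑' n : ℕ+, β * n / Real.sinh (π * n * β)) := by
  have h1 := mul_sq_eq α β hα hβ hαβ
  have h2 := mul_sq_eq β α hβ hα (by rwa [mul_comm])
  simp only [mul_div_assoc, tsum_mul_left]
  rw [← h1]
  set a := ∑' n : ℤ, 1 / Real.cosh (π * n * α)
  set b := ∑' n : ℤ, 1 / Real.cosh (π * n * β)
  have ha : 0 ≤ a := tsum_nonneg fun n ↦ (div_pos one_pos (Real.cosh_pos _)).le
  have hb : 0 ≤ b := tsum_nonneg fun n ↦ (div_pos one_pos (Real.cosh_pos _)).le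
  have hab : b = α * a := by
    have h3 : α * a ^ 2 = β * b ^ 2 := by rw [h1, h2]; ring
    have h4 : b ^ 2 = (α * a) ^ 2 := by linear_combination (-b ^ 2) * hαβ - α * h3
    exact (sq_eq_sq₀ hb (by positivity)).1 h4
  rw [hab]
  ring
end

section
/- For every real number α > 0, ∫₀^∞ sin(α x²) / (sinh(π x) sinh(α x)) dx = ( ∫₀^∞ cos(α x²)/cosh(π x) dx )² + ( ∫₀^∞ sin(α x²)/cosh(π x) dx )². -/
open Real MeasureTheory

/-!
The right-hand side is `|F|² / 4`, where `F = ∫_ℝ e^{iαx²} / cosh(πx) dx`. Writing `|F|² = F · F̄` as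
a double integral over `(x, y)` and substituting `x = u + y` turns it into
`∫_u ∫_y e^{iαu(u+2y)} / (cosh π(u+y) cosh πy) dy du` (`product_eq`), and it remains to evaluate the
inner integral as `2 sin(αu²) / (sinh πu sinh αu)` for `u ≠ 0` (`inner_eval`).

For this, `sinh πu / (cosh π(u+y) cosh πy) = tanh π(y+u) - tanh πy = ∫_0^u π sech² π(y+s) ds`.
Exchanging the integrals and translating `y` by `s` factors the result (`inner_swap`) into the
elementary integral `∫_0^u e^{iαu(u-2s)} ds = sin(αu²) / (αu)` and the Fourier transform of
`sech²(πy)`. The substitution `t = sigmoid (2πy)` identifies the latter with the beta integral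
`B(1 + ia, 1 - ia) = Γ(1 + ia) Γ(1 - ia)`, and the reflection formula gives `πa / sinh(πa)`
(`integral_exp_div_cosh_sq`); no contour integration is needed.
-/

lemma sigmoid_cosh (y : ℝ) :
    Real.sigmoid (2 * y) * (1 - Real.sigmoid (2 * y)) = 1 / (4 * Real.cosh y ^ 2) := by
  have h : Real.exp (-(2 * y)) = Real.exp (-y) ^ 2 := by
    rw [← Real.exp_nat_mul]; congr 1; push_cast; ring
  have h1 : Real.exp y * Real.exp (-y) = 1 := by rw [← Real.exp_add]; simp
  have h2 : Real.exp y = (Real.exp (-y))⁻¹ := by rw [Real.exp_neg, inv_inv]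
  rw [Real.sigmoid_def, Real.cosh_eq, h, h2]
  have := Real.exp_pos (-y)
  field_simp
  ring

/-- For `p = sigmoid t` and `q = 1 - p = sigmoid (-t)`, which satisfy `q = p e^{-t}`, this computes the
beta integrand after the substitution. -/
lemma cpow_ratio {p q t : ℝ} (hp : 0 < p) (hq : 0 < q) (h : q = p * Real.exp (-t)) (a : ℝ) :
    (p : ℂ) ^ (a * Complex.I) * (q : ℂ) ^ (-(a * Complex.I))
      = Complex.exp ((a * t : ℝ) * Complex.I) := by
  have hl : Real.log q = Real.log p - t := by
    rw [h, Real.log_mul hp.ne' (Real.exp_pos _).ne', Real.log_exp]; ring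
  rw [Complex.cpow_def_of_ne_zero (by exact_mod_cast hp.ne'),
    Complex.cpow_def_of_ne_zero (by exact_mod_cast hq.ne'), ← Complex.exp_add,
    ← Complex.ofReal_log hp.le, ← Complex.ofReal_log hq.le, hl]
  congr 1
  push_cast
  ring

/-- The Fourier transform of `sech²(πy)`, from the beta function and Euler's reflection formula. -/
lemma integral_exp_div_cosh_sq {a : ℝ} (ha : a ≠ 0) :
    ∫ y : ℝ, Complex.exp ((2 * π * a * y : ℝ) * Complex.I) * ((1 / Real.cosh (π * y) ^ 2 : ℝ) : ℂ)
      = ((2 * a / Real.sinh (π * a) : ℝ) : ℂ) := by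
  have hb1 := Complex.Gamma_mul_Gamma_eq_betaIntegral (s := 1 + a * Complex.I)
    (t := 1 - a * Complex.I) (by simp) (by simp)
  have hz : (a : ℂ) * Complex.I ≠ 0 := by simp [ha]
  have hG2 : Complex.Gamma (1 + a * Complex.I + (1 - a * Complex.I)) = 1 := by
    rw [show (1 + a * Complex.I + (1 - a * Complex.I) : ℂ) = (1 : ℕ) + 1 by push_cast; ring,
      Complex.Gamma_nat_eq_factorial]
    simp
  rw [hG2, one_mul, add_comm, Complex.Gamma_add_one _ hz, mul_assoc,
    Complex.Gamma_mul_Gamma_one_sub, ← mul_assoc, Complex.sin_mul_I] at hb1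
  have hinj : Function.Injective fun y : ℝ => Real.sigmoid (2 * π * y) := fun x y h => by
    have := Real.sigmoid_injective h
    simpa [pi_ne_zero] using this
  have hrange : (fun y : ℝ => Real.sigmoid (2 * π * y)) '' Set.univ = Set.Ioo 0 1 := by
    rw [Set.image_univ, ← Real.range_sigmoid]
    ext t
    constructor
    · rintro ⟨y, rfl⟩; exact ⟨_, rfl⟩
    · rintro ⟨y, rfl⟩
      exact ⟨y / (2 * π), by simp only; congr 1; field_simp⟩
  have hderiv : ∀ y ∈ (Set.univ : Set ℝ), HasDerivWithinAt (fun y : ℝ => Real.sigmoid (2 * π * y))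
      (π / 2 * (1 / Real.cosh (π * y) ^ 2)) Set.univ y := fun y _ => by
    have h := (Real.hasDerivAt_sigmoid (2 * π * y)).comp y ((hasDerivAt_id y).const_mul (2 * π))
    refine HasDerivAt.hasDerivWithinAt ?_
    convert! h using 1
    rw [mul_assoc 2 π y, sigmoid_cosh]
    ring
  have hsub := integral_image_eq_integral_abs_deriv_smul MeasurableSet.univ hderiv
    hinj.injOn (fun t : ℝ => (t : ℂ) ^ (a * Complex.I) * (1 - (t : ℂ)) ^ (-(a * Complex.I)))
  have hbeta : Complex.betaIntegral (a * Complex.I + 1) (1 - a * Complex.I) =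
      ∫ t in Set.Ioo (0 : ℝ) 1, (t : ℂ) ^ (a * Complex.I) * (1 - (t : ℂ)) ^ (-(a * Complex.I)) := by
    rw [Complex.betaIntegral, intervalIntegral.integral_of_le zero_le_one,
      integral_Ioc_eq_integral_Ioo]
    simp
  rw [hrange, ← hbeta, Measure.restrict_univ] at hsub
  have hval : Complex.betaIntegral (a * Complex.I + 1) (1 - a * Complex.I) = (π / 2 : ℝ) •
      ∫ y : ℝ, Complex.exp ((2 * π * a * y : ℝ) * Complex.I) *
        ((1 / Real.cosh (π * y) ^ 2 : ℝ) : ℂ) := by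
    rw [hsub, ← integral_smul]
    congr 1 with y
    have h := cpow_ratio (Real.sigmoid_pos (2 * π * y)) (Real.sigmoid_pos (-(2 * π * y)))
      (Real.sigmoid_mul_rexp_neg _).symm a
    rw [Real.sigmoid_neg, Complex.ofReal_sub, Complex.ofReal_one] at h
    rw [h, abs_of_nonneg (by positivity), show 2 * π * a * y = a * (2 * π * y) by ring,
      Complex.real_smul, Complex.real_smul]
    push_cast
    ring
  rw [hval] at hb1
  have hs : Real.sinh (π * a) ≠ 0 := by simp [pi_ne_zero, ha]
  have hsC : (Complex.sinh (π * a) : ℂ) ≠ 0 := by exact_mod_cast hs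
  have hpi : (π : ℂ) ≠ 0 := by exact_mod_cast pi_ne_zero
  rw [Complex.real_smul] at hb1
  push_cast at hb1 ⊢
  have hI := Complex.I_ne_zero
  field_simp at hb1 ⊢
  linear_combination -hb1

lemma one_add_sq_le_cosh (x : ℝ) : 1 + x ^ 2 / 2 ≤ Real.cosh x := by
  have h : Real.cosh x = 1 + 2 * Real.sinh (x / 2) ^ 2 := by
    conv_lhs => rw [show x = 2 * (x / 2) by ring]
    rw [Real.cosh_two_mul, Real.cosh_sq]; ring
  have h2 : (x / 2) ^ 2 ≤ Real.sinh (x / 2) ^ 2 := by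
    rw [sq_le_sq, Real.abs_sinh]
    exact Real.self_le_sinh_iff.2 (abs_nonneg _)
  nlinarith

lemma integrable_one_div_cosh : Integrable fun x : ℝ => 1 / Real.cosh (π * x) := by
  refine Integrable.mono' integrable_inv_one_add_sq
    (Continuous.aestronglyMeasurable (Continuous.div (by fun_prop) (by fun_prop)
      fun x => (Real.cosh_pos _).ne')) (Filter.Eventually.of_forall fun x => ?_)
  rw [Real.norm_of_nonneg (by positivity), one_div]
  have h := one_add_sq_le_cosh (π * x)
  have hp : 2 ≤ π ^ 2 := by nlinarith [pi_gt_three]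
  gcongr
  nlinarith [sq_nonneg x]

lemma integrable_one_div_cosh_sq : Integrable fun x : ℝ => 1 / Real.cosh (π * x) ^ 2 := by
  refine Integrable.mono' integrable_one_div_cosh
    (Continuous.aestronglyMeasurable (Continuous.div (by fun_prop) (by fun_prop)
      fun x => (pow_pos (Real.cosh_pos _) 2).ne')) (Filter.Eventually.of_forall fun x => ?_)
  rw [Real.norm_of_nonneg (by positivity)]
  have h := Real.one_le_cosh (π * x)
  gcongr
  nlinarith

/-- The integral is `tanh π(y+u) - tanh πy`, combined into one fraction by the subtraction formula
for `sinh`. -/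
lemma integral_sech_sq (u y : ℝ) :
    ∫ s in (0:ℝ)..u, π * (1 / Real.cosh (π * (y + s)) ^ 2)
      = Real.sinh (π * u) / (Real.cosh (π * (u + y)) * Real.cosh (π * y)) := by
  have hd : ∀ s ∈ Set.uIcc 0 u, HasDerivAt
      (fun s : ℝ => Real.sinh (π * (y + s)) / Real.cosh (π * (y + s)))
      (π * (1 / Real.cosh (π * (y + s)) ^ 2)) s := fun s _ => by
    have hl : HasDerivAt (fun s : ℝ => π * (y + s)) π s := by
      simpa using ((hasDerivAt_id s).const_add y).const_mul π
    convert! hl.sinh.div hl.cosh (Real.cosh_pos _).ne' using 1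
    have := Real.cosh_sq (π * (y + s))
    have h0 := (Real.cosh_pos (π * (y + s))).ne'
    field_simp
    linear_combination -this
  have hc : Continuous fun s : ℝ => π * (1 / Real.cosh (π * (y + s)) ^ 2) :=
    Continuous.mul (by fun_prop) (Continuous.div (by fun_prop) (by fun_prop)
      fun x => (pow_pos (Real.cosh_pos _) 2).ne')
  rw [intervalIntegral.integral_eq_sub_of_hasDerivAt hd (hc.intervalIntegrable _ _), add_zero,
    show π * (u + y) = π * (y + u) by ring, show π * u = π * (y + u) - π * y by ring,
    Real.sinh_sub]
  have h0 := (Real.cosh_pos (π * (y + u))).ne'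
  have h1 := (Real.cosh_pos (π * y)).ne'
  field_simp

/-- Fubini applied to the representation of the hyperbolic kernel in `integral_sech_sq`, followed by
the translation `y ↦ y - s`. -/
lemma inner_swap (α u : ℝ) :
    ∫ y : ℝ, Complex.exp ((α * u * (u + 2 * y) : ℝ) * Complex.I) *
        ((Real.sinh (π * u) / (Real.cosh (π * (u + y)) * Real.cosh (π * y)) : ℝ) : ℂ)
      = (∫ s in (0:ℝ)..u, Complex.exp ((α * u * (u - 2 * s) : ℝ) * Complex.I)) * (π *
        ∫ y : ℝ, Complex.exp ((2 * α * u * y : ℝ) * Complex.I) *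
          ((1 / Real.cosh (π * y) ^ 2 : ℝ) : ℂ)) := by
  have hint : Integrable (Function.uncurry fun (s : ℝ) (y : ℝ) =>
      Complex.exp ((α * u * (u + 2 * y) : ℝ) * Complex.I) *
        ((π * (1 / Real.cosh (π * (y + s)) ^ 2) : ℝ) : ℂ))
      ((volume.restrict (Set.uIoc 0 u)).prod volume) := by
    -- The norm of the integrand is `π ⊗ sech²` composed with the shear `(s, y) ↦ (s, s + y)`.
    have h1 : Integrable (fun _ : ℝ => (π : ℝ)) (volume.restrict (Set.uIoc 0 u)) := by
      rw [Set.uIoc]; exact integrable_const _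
    have h2 := (measurePreserving_prod_add (volume.restrict (Set.uIoc 0 u))
      (volume : Measure ℝ)).integrable_comp_of_integrable
        (h1.mul_prod integrable_one_div_cosh_sq)
    refine h2.mono (Continuous.aestronglyMeasurable ?_) (Filter.Eventually.of_forall fun z => ?_)
    · have : ∀ x : ℝ × ℝ, Real.cosh (π * (x.2 + x.1)) ^ 2 ≠ 0 :=
        fun x => (pow_pos (Real.cosh_pos _) 2).ne'
      simp only [Function.uncurry_def]
      fun_prop (disch := assumption)
    · simp only [Function.uncurry, Function.comp, norm_mul, Complex.norm_exp_ofReal_mul_I, one_mul,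
        Complex.norm_real]
      rw [add_comm z.2 z.1]
  have hswap := intervalIntegral_integral_swap hint
  calc _ = ∫ y : ℝ, ∫ s in (0:ℝ)..u, Complex.exp ((α * u * (u + 2 * y) : ℝ) * Complex.I) *
        ((π * (1 / Real.cosh (π * (y + s)) ^ 2) : ℝ) : ℂ) := by
        congr 1 with y
        rw [intervalIntegral.integral_const_mul, intervalIntegral.integral_ofReal, integral_sech_sq]
    _ = ∫ s in (0:ℝ)..u, ∫ y : ℝ, Complex.exp ((α * u * (u + 2 * y) : ℝ) * Complex.I) *
        ((π * (1 / Real.cosh (π * (y + s)) ^ 2) : ℝ) : ℂ) := hswap.symm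
    _ = _ := by
        rw [← intervalIntegral.integral_mul_const]
        congr 1 with s
        rw [← integral_const_mul, ← integral_const_mul, ← integral_sub_right_eq_self _ s]
        congr 1 with y
        have he : Complex.exp ((α * u * (u + 2 * (y - s)) : ℝ) * Complex.I)
            = Complex.exp ((α * u * (u - 2 * s) : ℝ) * Complex.I)
              * Complex.exp ((2 * α * u * y : ℝ) * Complex.I) := by
          rw [← Complex.exp_add]; congr 1; push_cast; ring
        rw [sub_add_cancel, he]
        push_cast
        ring

lemma integral_exp_seg {c u : ℝ} (hc : c ≠ 0) :
    ∫ s in (0:ℝ)..u, Complex.exp ((c * (u - 2 * s) : ℝ) * Complex.I)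
      = ((Real.sin (c * u) / c : ℝ) : ℂ) := by
  have hcC : (c : ℂ) ≠ 0 := by exact_mod_cast hc
  have h : ∀ s : ℝ, Complex.exp ((c * (u - 2 * s) : ℝ) * Complex.I)
      = Complex.exp (c * u * Complex.I) * Complex.exp ((-2 * c * Complex.I) * s) := fun s => by
    rw [← Complex.exp_add]; congr 1; push_cast; ring
  simp_rw [h]
  rw [intervalIntegral.integral_const_mul, integral_exp_mul_complex (by simp [hc])]
  push_cast
  rw [Complex.sin, mul_div_assoc', mul_sub, ← Complex.exp_add, ← Complex.exp_add,
    show (c * u * Complex.I + -2 * c * Complex.I * u : ℂ) = -(c * u) * Complex.I by ring]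
  have := Complex.I_sq
  simp only [mul_zero, add_zero]
  have hI := Complex.I_ne_zero
  field_simp
  rw [this]
  ring

lemma inner_eval {α u : ℝ} (hα : 0 < α) (hu : u ≠ 0) :
    ∫ y : ℝ, Complex.exp ((α * u * (u + 2 * y) : ℝ) * Complex.I) *
        ((1 / (Real.cosh (π * (u + y)) * Real.cosh (π * y)) : ℝ) : ℂ)
      = ((2 * (Real.sin (α * u ^ 2) / (Real.sinh (π * u) * Real.sinh (α * u))) : ℝ) : ℂ) := by
  have h1 := inner_swap α u
  rw [integral_exp_seg (mul_ne_zero hα.ne' hu)] at h1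
  have ha : α * u / π ≠ 0 := by have := hα.ne'; positivity
  have h2 := integral_exp_div_cosh_sq ha
  rw [show π * (α * u / π) = α * u by field_simp,
    show (2 * π * (α * u / π)) = 2 * α * u by field_simp] at h2
  rw [h2] at h1
  have hs : Real.sinh (π * u) ≠ 0 := by simp [pi_ne_zero, hu]
  have hs2 : Real.sinh (α * u) ≠ 0 := by simp [hα.ne', hu]
  have hsC : (Real.sinh (π * u) : ℂ) ≠ 0 := by exact_mod_cast hs
  refine mul_left_cancel₀ hsC ?_
  rw [← integral_const_mul]
  calc _ = _ := by
        congr 1 with y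
        push_cast
        ring
    _ = _ := h1
    _ = _ := by
        rw [← Complex.ofReal_mul, ← Complex.ofReal_mul, ← Complex.ofReal_mul]
        congr 1
        have := hα.ne'
        rw [show α * u * u = α * u ^ 2 by ring]
        field_simp

lemma integrable_f (c : ℝ) : Integrable fun x : ℝ =>
    Complex.exp ((c * x ^ 2 : ℝ) * Complex.I) * ((1 / Real.cosh (π * x) : ℝ) : ℂ) := by
  refine integrable_one_div_cosh.mono (Continuous.aestronglyMeasurable ?_)
    (Filter.Eventually.of_forall fun x => ?_)
  · have : ∀ x : ℝ, Real.cosh (π * x) ≠ 0 := fun x => (Real.cosh_pos _).ne'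
    fun_prop (disch := assumption)
  · simp only [norm_mul, Complex.norm_exp_ofReal_mul_I, one_mul, Complex.norm_real, le_refl]

/-- `F · F̄` as a single real integral, by the shear `(u, y) ↦ (u + y, y)`: the phase `x² - y²`
becomes `u (u + 2y)`. The conjugate `F̄` is written as `F` with `α` replaced by `-α`. -/
lemma product_eq {α : ℝ} (hα : 0 < α) :
    (∫ x : ℝ, Complex.exp ((α * x ^ 2 : ℝ) * Complex.I) * ((1 / Real.cosh (π * x) : ℝ) : ℂ)) *
      (∫ x : ℝ, Complex.exp ((-α * x ^ 2 : ℝ) * Complex.I) * ((1 / Real.cosh (π * x) : ℝ) : ℂ))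
    = ((∫ u : ℝ, 2 * (Real.sin (α * u ^ 2) / (Real.sinh (π * u) * Real.sinh (α * u))) : ℝ) : ℂ) := by
  have hmp := measurePreserving_add_prod (volume : Measure ℝ) (volume : Measure ℝ)
  have hint := (integrable_f α).mul_prod (integrable_f (-α))
  have hint2 := hmp.integrable_comp_of_integrable hint
  rw [← integral_prod_mul, ← hmp.map_eq,
    integral_map hmp.measurable.aemeasurable (by rw [hmp.map_eq]; exact hint.aestronglyMeasurable)]
  refine (integral_prod _ hint2).trans ?_
  rw [← integral_complex_ofReal]
  simp only [Function.comp]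
  refine integral_congr_ae ?_
  -- The inner evaluation fails at `u = 0`, where the quotient on the right is `0 / 0`.
  filter_upwards [compl_mem_ae_iff.2 (measure_singleton (0:ℝ))] with u hu
  rw [← inner_eval hα hu]
  congr 1 with y
  rw [mul_mul_mul_comm, ← Complex.exp_add]
  push_cast
  congr 1
  · congr 1; ring
  · ring

lemma integral_even (g : ℝ → ℝ) (hg : ∀ x, g (-x) = g x) :
    ∫ x, g x = 2 * ∫ x in Set.Ioi (0:ℝ), g x := by
  rw [← integral_comp_abs]
  congr 1 with x
  rcases abs_choice x with h | h <;> simp [h, hg]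

lemma integral_f (c : ℝ) :
    ∫ x : ℝ, Complex.exp ((c * x ^ 2 : ℝ) * Complex.I) * ((1 / Real.cosh (π * x) : ℝ) : ℂ)
      = (2 * ∫ x in Set.Ioi (0:ℝ), Real.cos (c * x ^ 2) / Real.cosh (π * x) : ℝ)
        + (2 * ∫ x in Set.Ioi (0:ℝ), Real.sin (c * x ^ 2) / Real.cosh (π * x) : ℝ) * Complex.I := by
  have hre := integral_re (integrable_f c)
  have him := integral_im (integrable_f c)
  rw [← integral_even (fun x => Real.cos (c * x ^ 2) / Real.cosh (π * x)) (by simp),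
    ← integral_even (fun x => Real.sin (c * x ^ 2) / Real.cosh (π * x)) (by simp)]
  apply Complex.ext
  · refine hre.symm.trans ?_
    simp only [Complex.add_re, Complex.re_ofReal_mul, Complex.ofReal_re, Complex.I_re, mul_zero,
      add_zero]
    congr 1 with x
    simp only [RCLike.re_eq_complex_re, Complex.re_mul_ofReal, Complex.exp_ofReal_mul_I_re]
    ring
  · refine him.symm.trans ?_
    simp only [Complex.add_im, Complex.im_ofReal_mul, Complex.ofReal_im, Complex.I_im, mul_one,
      zero_add]
    congr 1 with x
    simp only [RCLike.im_eq_complex_im, Complex.im_mul_ofReal, Complex.exp_ofReal_mul_I_im]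
    ring

theorem stmt_14 (α : ℝ) (hα : 0 < α) :
    (∫ x in Set.Ioi (0:ℝ), Real.sin (α * x ^ 2) / (Real.sinh (π * x) * Real.sinh (α * x)))
      = (∫ x in Set.Ioi (0:ℝ), Real.cos (α * x ^ 2) / Real.cosh (π * x)) ^ 2
        + (∫ x in Set.Ioi (0:ℝ), Real.sin (α * x ^ 2) / Real.cosh (π * x)) ^ 2 := by
  have h := product_eq hα
  rw [integral_f, integral_f, integral_const_mul, integral_even (fun x =>
    Real.sin (α * x ^ 2) / (Real.sinh (π * x) * Real.sinh (α * x))) (by simp)] at h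
  simp only [neg_mul, Real.cos_neg, Real.sin_neg, neg_div, integral_neg] at h
  have h' := congrArg Complex.re h
  simp at h'
  linarith
end
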